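/- arXiv:2205.15216 — 2 statements merged into one kernel-verified Lean document; each statement's English description precedes it below -/
import Mathlib

section
/- Assume there exist a constant 0 < θ < 1 and a positive integer N_θ such that p_{n+1} − p_n ≤ p_n^θ for all n ≥ N_θ. Let 1/2 < t < 1, and let M be a positive integer with M ≥ max{ 4^{1/(1-t)}·(20·2^{6t−t²}(2t−1)/(3(1−t)²(1−2^{1−2t})))^{2/(t(1-t))}, (50·(6/5)^{t(2-t)})^{2/(1-t)} }, and let N₀ be a positive integer with N₀ ≥ max{ N_θ, 85536·M⁵, 3×10^{18}, 2e^{16/(1-t)⁴}, 1/(1−2^{−1/(2t−1)}), M^{1/(1-t)²}, ((40/7)(1−t)²)^{2/t}·(2^{1+2t}/(2t−1))^{(2−t)/t}·M^{(1+t)/t}, e^{1/((2t−1)(1−t))} }. Then for any positive integer n₀ ≥ N₀, the squares of sidelength p_n^{-t} for n ≥ n₀ can be packed perfectly into a square of area ∑_{n=n₀}^{∞} p_n^{-2t}. -/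
open Set MeasureTheory

/-- The `n`-th prime number, 1-indexed: `nthPrime 1 = 2`, `nthPrime 2 = 3`, ... -/
noncomputable def nthPrime (n : ℕ) : ℕ := Nat.nth Nat.Prime (n - 1)

/-- The axis-parallel square with lower-left corner `c` and sidelength `s`. -/
noncomputable def square (c : ℝ × ℝ) (s : ℝ) : Set (ℝ × ℝ) :=
  Set.Icc c.1 (c.1 + s) ×ˢ Set.Icc c.2 (c.2 + s)

/-- The family of sets `S i` is packed perfectly into `Ω`: the sets are contained in `Ω`,
have pairwise disjoint interiors, and cover `Ω` up to a Lebesgue-null set. -/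
def PerfectlyPacked {ι : Type*} (S : ι → Set (ℝ × ℝ)) (Ω : Set (ℝ × ℝ)) : Prop :=
  (∀ i, S i ⊆ Ω) ∧
  (Pairwise fun i j => Disjoint (interior (S i)) (interior (S j))) ∧
  volume (Ω \ ⋃ i, S i) = 0

/-!
The squares are packed greedily, in rows and in order of decreasing sidelength `s k`. Cutting a row
of consecutive squares off one of the empty rectangles leaves smaller empty rectangles: one above
the row, one at its end, and a narrow sliver on top of each square. Progress is measured by the
total weighted perimeter `∑ (w ^ δ * h + w * h ^ δ)` of the empty `w × h` rectangles, which a row of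
at least `M / 2` squares increases by at most a multiple of `(∑ s j ^ (1 + δ)) / M`, summed over its
squares. If every empty rectangle had a side shorter than `M * s k`, then the whole empty area would
be at most `(M * s k) ^ (1 - δ)` times the weighted perimeter, and for a suitable `M` this is less
than the area of the squares yet to be packed. So some empty rectangle has both sides at least
`M * s k` and another row fits. Hence all finite subfamilies can be packed; since being packed is a
closed condition on the corners, compactness gives a packing of the whole family, which is perfect
because the areas agree.

The estimates need `s j ^ (1 + δ)` to decay slower than `1 / j`. For `s n = p_n ^ (-t)` and
`δ = 1 - t` the exponent of `p_n` is `-(1 - δ ^ 2)`, and Chebyshev's bounds on `p_n` suffice.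
-/

/-! ### Placements and compactness -/

/-- An axis-parallel rectangle, possibly degenerate, given by its lower-left corner and its
sidelengths. -/
structure Rect where
  corner : ℝ × ℝ
  dims : ℝ × ℝ

namespace Rect

/-- Separation of two rectangles by an axis-parallel line. Unlike disjointness of the interiors,
this is a closed condition on the corners. -/
def Separated (R R' : Rect) : Prop :=
  R.corner.1 + R.dims.1 ≤ R'.corner.1 ∨ R'.corner.1 + R'.dims.1 ≤ R.corner.1 ∨
    R.corner.2 + R.dims.2 ≤ R'.corner.2 ∨ R'.corner.2 + R'.dims.2 ≤ R.corner.2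

/-- Containment of the first rectangle in the second one, as inequalities between corners in the
product order of `ℝ × ℝ`. -/
def Within (R R' : Rect) : Prop :=
  R'.corner ≤ R.corner ∧ R.corner + R.dims ≤ R'.corner + R'.dims

lemma Within.refl (R : Rect) : R.Within R := ⟨le_rfl, le_rfl⟩

lemma Within.trans {R R' R'' : Rect} (h : R.Within R') (h' : R'.Within R'') : R.Within R'' :=
  ⟨h'.1.trans h.1, h.2.trans h'.2⟩

lemma Separated.symm {R R' : Rect} (h : R.Separated R') : R'.Separated R := by
  unfold Separated at *
  tauto

lemma Separated.mono {R R' Q Q' : Rect} (h : R.Separated R') (hQ : Q.Within R)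
    (hQ' : Q'.Within R') : Q.Separated Q' := by
  obtain ⟨⟨_, _⟩, _, _⟩ := hQ
  obtain ⟨⟨_, _⟩, _, _⟩ := hQ'
  simp only [Prod.fst_add, Prod.snd_add] at *
  rcases h with h | h | h | h
  · exact .inl (by linarith)
  · exact .inr (.inl (by linarith))
  · exact .inr (.inr (.inl (by linarith)))
  · exact .inr (.inr (.inr (by linarith)))

end Rect

/-- The corners `pos i` place the squares of sidelengths `s i`, `i ∈ S`, into the rectangles of the
list `l`, any two squares being separated by an axis-parallel line. -/
structure IsPlacement {ι : Type*} (s : ι → ℝ) (l : List Rect) (S : Set ι) (pos : ι → ℝ × ℝ) :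
    Prop where
  within : ∀ i ∈ S, ∃ R ∈ l, Rect.Within ⟨pos i, (s i, s i)⟩ R
  separated : S.Pairwise fun i j => Rect.Separated ⟨pos i, (s i, s i)⟩ ⟨pos j, (s j, s j)⟩

namespace IsPlacement

variable {ι κ : Type*} {s : ι → ℝ} {l : List Rect} {S : Set ι} {pos : ι → ℝ × ℝ}

lemma mono_rect {l' : List Rect} (h : IsPlacement s l S pos)
    (hl : ∀ R ∈ l, ∃ R' ∈ l', R.Within R') : IsPlacement s l' S pos := by
  refine ⟨fun i hi => ?_, h.separated⟩
  obtain ⟨R, hR, hiR⟩ := h.within i hi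
  obtain ⟨R', hR', hRR'⟩ := hl R hR
  exact ⟨R', hR', hiR.trans hRR'⟩

lemma comp_injective {f : κ → ι} {T : Set κ} (h : IsPlacement s l S pos)
    (hf : f.Injective) (hT : MapsTo f T S) : IsPlacement (s ∘ f) l T (pos ∘ f) :=
  ⟨fun i hi => h.within (f i) (hT hi), fun _ hi _ hj hij =>
    h.separated (hT hi) (hT hj) (hf.ne hij)⟩

lemma insert_square {c : ℝ × ℝ} {k : ι} [DecidableEq ι] (h : IsPlacement s l S pos) (hk : k ∉ S)
    (hl : ∀ R ∈ l, Rect.Separated ⟨c, (s k, s k)⟩ R) :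
    IsPlacement s (⟨c, (s k, s k)⟩ :: l) (insert k S) (Function.update pos k c) := by
  have hpos : ∀ i ∈ S, Function.update pos k c i = pos i := fun i hi =>
    Function.update_of_ne (ne_of_mem_of_not_mem hi hk) _ _
  refine ⟨forall_mem_insert.2 ⟨?_, fun i hi => ?_⟩,
    (pairwise_insert_of_notMem hk).2 ⟨fun i hi j hj hij => ?_, fun i hi => ?_⟩⟩
  · exact ⟨_, List.mem_cons_self, by simpa using Rect.Within.refl _⟩
  · obtain ⟨R, hR, hiR⟩ := h.within i hi
    exact ⟨R, List.mem_cons_of_mem _ hR, by rwa [hpos i hi]⟩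
  · simp only [hpos i hi, hpos j hj]
    exact h.separated hi hj hij
  · obtain ⟨R, hR, hiR⟩ := h.within i hi
    have hsep := (hl R hR).mono (.refl _) hiR
    rw [hpos i hi, Function.update_self]
    exact ⟨hsep, hsep.symm⟩

lemma isClosed_setOf (s : ι → ℝ) (R : Rect) (S : Set ι) :
    IsClosed {pos : ι → ℝ × ℝ | IsPlacement s [R] S pos} := by
  have h : {pos : ι → ℝ × ℝ | IsPlacement s [R] S pos} =
      (⋂ i ∈ S, {pos | Rect.Within ⟨pos i, (s i, s i)⟩ R}) ∩
        ⋂ i ∈ S, ⋂ j ∈ S, ⋂ _ : i ≠ j,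
          {pos | Rect.Separated ⟨pos i, (s i, s i)⟩ ⟨pos j, (s j, s j)⟩} := by
    ext pos
    simp only [mem_inter_iff, mem_iInter, mem_ofPred_eq]
    exact ⟨fun ⟨hw, hsep⟩ => ⟨fun i hi => by simpa using hw i hi, fun i hi j hj hij =>
      hsep hi hj hij⟩, fun ⟨hw, hsep⟩ => ⟨fun i hi => ⟨R, List.mem_singleton_self R, hw i hi⟩,
      fun i hi j hj hij => hsep i hi j hj hij⟩⟩
  rw [h]
  refine (isClosed_biInter fun i _ => ?_).inter (isClosed_biInter fun i _ =>
    isClosed_biInter fun j _ => isClosed_iInter fun _ => ?_)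
  · simp only [Rect.Within, ofPred_and]
    refine (isClosed_le ?_ ?_).inter (isClosed_le ?_ ?_) <;> fun_prop
  · simp only [Rect.Separated, ofPred_or]
    refine (isClosed_le ?_ ?_).union ((isClosed_le ?_ ?_).union
      ((isClosed_le ?_ ?_).union (isClosed_le ?_ ?_))) <;> fun_prop

lemma exists_forall_mem_Icc {R : Rect} {F : Finset ι}
    (h : IsPlacement s [R] F pos) (hR : 0 ≤ R.dims) (hs : ∀ i, 0 ≤ s i) :
    ∃ pos', IsPlacement s [R] F pos' ∧ ∀ i, pos' i ∈ Icc R.corner (R.corner + R.dims) := by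
  classical
  have heq : ∀ i ∈ F, F.piecewise pos (fun _ => R.corner) i = pos i := fun i hi =>
    F.piecewise_eq_of_mem _ _ hi
  refine ⟨F.piecewise pos fun _ => R.corner, ⟨fun i hi => ?_, fun i hi j hj hij => ?_⟩,
    fun i => ?_⟩
  · rw [heq i hi]
    exact h.within i hi
  · simp only [heq i hi, heq j hj]
    exact h.separated hi hj hij
  · by_cases hi : i ∈ F
    · obtain ⟨R', hR', hiR⟩ := h.within i hi
      obtain rfl := List.mem_singleton.1 hR'
      have hsi : (0 : ℝ × ℝ) ≤ (s i, s i) := ⟨hs i, hs i⟩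
      rw [heq i hi]
      exact ⟨hiR.1, (le_add_of_nonneg_right hsi).trans hiR.2⟩
    · rw [F.piecewise_eq_of_notMem _ _ hi]
      exact ⟨le_rfl, le_add_of_nonneg_right hR⟩

theorem exists_univ_of_forall_finset {R : Rect} (hR : 0 ≤ R.dims) (hs : ∀ i, 0 ≤ s i)
    (h : ∀ F : Finset ι, ∃ pos, IsPlacement s [R] F pos) :
    ∃ pos, IsPlacement s [R] univ pos := by
  classical
  set K : Set (ι → ℝ × ℝ) := univ.pi fun _ => Icc R.corner (R.corner + R.dims)
  have hK : IsCompact K := isCompact_univ_pi fun _ => isCompact_Icc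
  set C : Finset ι → Set (ι → ℝ × ℝ) := fun F => K ∩ {pos | IsPlacement s [R] F pos}
  have hC : ∀ F, IsCompact (C F) := fun F => hK.inter_right (isClosed_setOf s R F)
  have hanti : Antitone C := fun F G hFG => inter_subset_inter_right K fun pos hpos =>
    ⟨fun i hi => hpos.within i (hFG hi), hpos.separated.mono (Finset.coe_subset.2 hFG)⟩
  have hne : ∀ F, (C F).Nonempty := fun F => by
    obtain ⟨pos, hpos⟩ := h F
    obtain ⟨pos', hpos', hK⟩ := hpos.exists_forall_mem_Icc hR hs
    exact ⟨pos', fun i _ => hK i, hpos'⟩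
  obtain ⟨pos, hpos⟩ := IsCompact.nonempty_iInter_of_directed_nonempty_isCompact_isClosed C
    hanti.directed_ge hne hC fun F => (hC F).isClosed
  have hpos : ∀ F : Finset ι, IsPlacement s [R] F pos := fun F => (mem_iInter.1 hpos F).2
  refine ⟨pos, fun i _ => (hpos {i}).within i (by simp), fun i _ j _ hij => ?_⟩
  exact (hpos {i, j}).separated (by simp) (by simp) hij

end IsPlacement

section Square

variable {c c' : ℝ × ℝ} {s s' : ℝ}

lemma square_eq_Icc (c : ℝ × ℝ) (s : ℝ) : square c s = Icc c (c + (s, s)) := by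
  rw [square, Icc_prod_eq, Prod.fst_add, Prod.snd_add]

lemma interior_square (c : ℝ × ℝ) (s : ℝ) :
    interior (square c s) = Ioo c.1 (c.1 + s) ×ˢ Ioo c.2 (c.2 + s) := by
  rw [square, interior_prod_eq, interior_Icc, interior_Icc]

lemma volume_square (c : ℝ × ℝ) (hs : 0 ≤ s) : volume (square c s) = ENNReal.ofReal (s ^ 2) := by
  rw [square, Measure.volume_eq_prod, Measure.prod_prod, Real.volume_Icc, Real.volume_Icc,
    add_sub_cancel_left, add_sub_cancel_left, ← ENNReal.ofReal_mul hs, sq]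

lemma volume_interior_square (c : ℝ × ℝ) (hs : 0 ≤ s) :
    volume (interior (square c s)) = ENNReal.ofReal (s ^ 2) := by
  rw [interior_square, Measure.volume_eq_prod, Measure.prod_prod, Real.volume_Ioo,
    Real.volume_Ioo, add_sub_cancel_left, add_sub_cancel_left, ← ENNReal.ofReal_mul hs, sq]

lemma Rect.Separated.disjoint_interior_square
    (h : Rect.Separated ⟨c, (s, s)⟩ ⟨c', (s', s')⟩) :
    Disjoint (interior (square c s)) (interior (square c' s')) := by
  rw [interior_square, interior_square, disjoint_left]
  rintro ⟨x, y⟩ ⟨⟨_, _⟩, _, _⟩ ⟨⟨_, _⟩, _, _⟩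
  dsimp only at *
  rcases h with h | h | h | h <;> dsimp only at h <;> linarith

end Square

theorem IsPlacement.perfectlyPacked {ι : Type*} [Countable ι] {s : ι → ℝ} {c : ℝ × ℝ} {a : ℝ}
    {pos : ι → ℝ × ℝ} (h : IsPlacement s [⟨c, (a, a)⟩] univ pos) (hs : ∀ i, 0 ≤ s i)
    (ha : 0 ≤ a) (harea : HasSum (fun i => s i ^ 2) (a ^ 2)) :
    PerfectlyPacked (fun i => square (pos i) (s i)) (square c a) := by
  have hsub : ∀ i, square (pos i) (s i) ⊆ square c a := fun i => by
    obtain ⟨R, hR, hiR⟩ := h.within i (mem_univ i)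
    obtain rfl := List.mem_singleton.1 hR
    rw [square_eq_Icc, square_eq_Icc]
    exact Icc_subset_Icc hiR.1 hiR.2
  have hdisj : Pairwise fun i j =>
      Disjoint (interior (square (pos i) (s i))) (interior (square (pos j) (s j))) :=
    fun i j hij => (h.separated (mem_univ i) (mem_univ j) hij).disjoint_interior_square
  refine ⟨hsub, hdisj, ?_⟩
  set U := ⋃ i, interior (square (pos i) (s i))
  have hU : MeasurableSet U := .iUnion fun i => isOpen_interior.measurableSet
  have hvol : volume U = volume (square c a) := by
    rw [measure_iUnion hdisj fun i => isOpen_interior.measurableSet, volume_square c ha,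
      ← harea.tsum_eq, ENNReal.ofReal_tsum_of_nonneg (fun i => sq_nonneg _) harea.summable]
    exact tsum_congr fun i => volume_interior_square _ (hs i)
  have hUsub : U ⊆ square c a := iUnion_subset fun i => interior_subset.trans (hsub i)
  refine measure_mono_null (t := square c a \ U)
    (sdiff_subset_sdiff_right (iUnion_mono fun i => interior_subset)) ?_
  rw [measure_sdiff hUsub hU.nullMeasurableSet (by simp [hvol, volume_square c ha]), hvol,
    tsub_self]

/-! ### Cutting rectangles -/

/-- For every choice of pairwise separated rectangles with dimensions listed by `L`, the squares of
sidelengths `s i`, `i ∈ S`, can be placed into them. -/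
def Packs {ι : Type*} (s : ι → ℝ) (L : Multiset (ℝ × ℝ)) (S : Set ι) : Prop :=
  ∀ l : List Rect, (l.map Rect.dims : Multiset (ℝ × ℝ)) = L → l.Pairwise Rect.Separated →
    ∃ pos, IsPlacement s l S pos

/-- The dimensions of the rectangles left over after cutting the squares of sidelengths
`s k ≥ s (k + 1) ≥ ⋯ ≥ s (k + m - 1)` out of a `w × h` rectangle, side by side along the width. -/
noncomputable def rowLeftover (s : ℕ → ℝ) (k m : ℕ) (w h : ℝ) : Multiset (ℝ × ℝ) :=
  (w - ∑ j ∈ Finset.Ico k (k + m), s j, s k) ::ₘ (w, h - s k) ::ₘ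
    (Finset.Ico k (k + m)).val.map fun j => (s j, s k - s j)

lemma exists_perm_cons_of_map_dims {l : List Rect} {d : ℝ × ℝ} {L : Multiset (ℝ × ℝ)}
    (hl : (l.map Rect.dims : Multiset (ℝ × ℝ)) = d ::ₘ L) :
    ∃ (c : ℝ × ℝ) (l' : List Rect), l.Perm (⟨c, d⟩ :: l') ∧
      (l'.map Rect.dims : Multiset (ℝ × ℝ)) = L := by
  classical
  have hd : d ∈ l.map Rect.dims := by
    rw [← Multiset.mem_coe, hl]
    exact Multiset.mem_cons_self _ _
  obtain ⟨⟨c, d⟩, hR, rfl⟩ := List.mem_map.1 hd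
  have hperm := List.perm_cons_erase hR
  refine ⟨c, _, hperm, ?_⟩
  have hmap := Multiset.coe_eq_coe.2 (hperm.map Rect.dims)
  rwa [hl, List.map_cons, ← Multiset.cons_coe, Multiset.cons_inj_right, eq_comm] at hmap

namespace Packs

section Rules

variable {ι : Type*} {s : ι → ℝ} {L : Multiset (ℝ × ℝ)} {S : Set ι} {k : ι}

lemma empty (s : ι → ℝ) (L : Multiset (ℝ × ℝ)) : Packs s L ∅ :=
  fun _ _ _ => ⟨0, by simp, by simp⟩

lemma cons_square (h : Packs s L S) (hk : k ∉ S) :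
    Packs s ((s k, s k) ::ₘ L) (insert k S) := by
  classical
  intro l hl hp
  obtain ⟨c, l', hperm, hl'⟩ := exists_perm_cons_of_map_dims hl
  have hp' := (hperm.pairwise_iff Rect.Separated.symm).1 hp
  rw [List.pairwise_cons] at hp'
  obtain ⟨pos, hpos⟩ := h l' hl' hp'.2
  exact ⟨_, (hpos.insert_square hk hp'.1).mono_rect fun R hR =>
    ⟨R, hperm.mem_iff.2 hR, .refl R⟩⟩

lemma of_split {d d₁ d₂ : ℝ × ℝ} (h : Packs s (d₁ ::ₘ d₂ ::ₘ L) S)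
    (hsplit : ∀ c, ∃ c₁ c₂, Rect.Within ⟨c₁, d₁⟩ ⟨c, d⟩ ∧ Rect.Within ⟨c₂, d₂⟩ ⟨c, d⟩ ∧
      Rect.Separated ⟨c₁, d₁⟩ ⟨c₂, d₂⟩) : Packs s (d ::ₘ L) S := by
  intro l hl hp
  obtain ⟨c, l', hperm, hl'⟩ := exists_perm_cons_of_map_dims hl
  obtain ⟨c₁, c₂, h₁, h₂, h₁₂⟩ := hsplit c
  have hp' := (hperm.pairwise_iff Rect.Separated.symm).1 hp
  rw [List.pairwise_cons] at hp'
  obtain ⟨pos, hpos⟩ := h (⟨c₁, d₁⟩ :: ⟨c₂, d₂⟩ :: l') (by simp [← hl']) <| by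
    refine List.pairwise_cons.2 ⟨List.forall_mem_cons.2 ⟨h₁₂, fun R hR => ?_⟩,
      List.pairwise_cons.2 ⟨fun R hR => ?_, hp'.2⟩⟩
    · exact (hp'.1 R hR).mono h₁ (.refl R)
    · exact (hp'.1 R hR).mono h₂ (.refl R)
  refine ⟨pos, hpos.mono_rect fun R hR => ?_⟩
  have hmem : ∀ {R}, R ∈ (⟨c, d⟩ :: l' : List Rect) → R ∈ l := hperm.mem_iff.2
  rcases List.mem_cons.1 hR with rfl | hR
  · exact ⟨_, hmem List.mem_cons_self, h₁⟩
  rcases List.mem_cons.1 hR with rfl | hR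
  · exact ⟨_, hmem List.mem_cons_self, h₂⟩
  · exact ⟨R, hmem (List.mem_cons_of_mem _ hR), .refl R⟩

lemma cut_width {a b h : ℝ} (ha : 0 ≤ a) (hb : 0 ≤ b)
    (H : Packs s ((a, h) ::ₘ (b, h) ::ₘ L) S) : Packs s ((a + b, h) ::ₘ L) S := by
  refine H.of_split fun c => ⟨c, (c.1 + a, c.2), ?_, ?_, .inl le_rfl⟩ <;>
    simp [Rect.Within, Prod.le_def, ha, hb, add_assoc]

lemma cut_height {w a b : ℝ} (ha : 0 ≤ a) (hb : 0 ≤ b)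
    (H : Packs s ((w, a) ::ₘ (w, b) ::ₘ L) S) : Packs s ((w, a + b) ::ₘ L) S := by
  refine H.of_split fun c => ⟨c, (c.1, c.2 + a), ?_, ?_, .inr (.inr (.inl le_rfl))⟩ <;>
    simp [Rect.Within, Prod.le_def, ha, hb, add_assoc]

lemma cut_square {w h : ℝ} (hs : 0 ≤ s k) (hw : s k ≤ w) (hh : s k ≤ h) (hk : k ∉ S)
    (H : Packs s ((w - s k, h) ::ₘ (s k, h - s k) ::ₘ L) S) :
    Packs s ((w, h) ::ₘ L) (insert k S) := by
  rw [Multiset.cons_swap] at H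
  have hcolumn := (H.cons_square hk).cut_height hs (sub_nonneg.2 hh)
  rw [add_sub_cancel] at hcolumn
  simpa only [add_sub_cancel] using hcolumn.cut_width hs (sub_nonneg.2 hw)

end Rules

section Row

variable {s : ℕ → ℝ} {L : Multiset (ℝ × ℝ)} {k m N : ℕ} {w h : ℝ}

lemma of_strip (hs : ∀ j, 0 ≤ s j) (hh : ∀ j, k ≤ j → s j ≤ h) (hm : k + m ≤ N)
    (hw : ∑ j ∈ Finset.Ico k (k + m), s j ≤ w)
    (H : Packs s ((w - ∑ j ∈ Finset.Ico k (k + m), s j, h) ::ₘ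
      ((Finset.Ico k (k + m)).val.map (fun j => (s j, h - s j)) + L)) (Ico (k + m) N)) :
    Packs s ((w, h) ::ₘ L) (Ico k N) := by
  induction m generalizing L with
  | zero => simpa using H
  | succ m ih =>
    have hsum : ∑ j ∈ Finset.Ico k (k + (m + 1)), s j =
        (∑ j ∈ Finset.Ico k (k + m), s j) + s (k + m) := by
      rw [← add_assoc, Finset.sum_Ico_succ_top (by omega)]
    have hval : (Finset.Ico k (k + (m + 1))).val = (k + m) ::ₘ (Finset.Ico k (k + m)).val := by
      rw [← add_assoc, ← Finset.insert_Ico_right_eq_Ico_add_one (by omega),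
        Finset.insert_val_of_notMem (by simp)]
    rw [hsum] at H hw
    rw [hval, Multiset.map_cons, Multiset.cons_add, ← sub_sub] at H
    refine ih (by omega) (by linarith [hs (k + m)]) ?_
    rw [← insert_Ico_add_one_left_eq_Ico (show k + m < N by omega)]
    exact H.cut_square (hs _) (by linarith) (hh _ (by omega)) (by simp)

lemma of_row (hs : ∀ j, 0 ≤ s j) (hanti : Antitone s) (hh : s k ≤ h) (hm : k + m ≤ N)
    (hw : ∑ j ∈ Finset.Ico k (k + m), s j ≤ w)
    (H : Packs s (rowLeftover s k m w h + L) (Ico (k + m) N)) :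
    Packs s ((w, h) ::ₘ L) (Ico k N) := by
  have hstrip : Packs s ((w, s k) ::ₘ (w, h - s k) ::ₘ L) (Ico k N) := by
    refine of_strip hs (fun j hj => hanti hj) hm hw ?_
    simpa only [rowLeftover, Multiset.cons_add, Multiset.add_cons] using H
  simpa only [add_sub_cancel] using hstrip.cut_height (hs k) (sub_nonneg.2 hh)

end Row

end Packs

/-! ### Weighted perimeter -/

/-- A weighted perimeter of the rectangle with dimensions `d`, comparable to its longer side times
the `δ`-th power of its shorter side. It is small for thin rectangles and yet, unlike the shorter
side alone, controls the area. -/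
noncomputable def weightedPerimeter (δ : ℝ) (d : ℝ × ℝ) : ℝ := d.1 ^ δ * d.2 + d.1 * d.2 ^ δ

section WeightedPerimeter

variable {δ : ℝ}

lemma weightedPerimeter_mono (hδ : 0 ≤ δ) {x y x' y' : ℝ} (hx : 0 ≤ x) (hy : 0 ≤ y)
    (hxx' : x ≤ x') (hyy' : y ≤ y') :
    weightedPerimeter δ (x, y) ≤ weightedPerimeter δ (x', y') := by
  have hx' := hx.trans hxx'
  dsimp only [weightedPerimeter]
  gcongr

lemma weightedPerimeter_self (hδ : 0 ≤ δ) {c : ℝ} (hc : 0 ≤ c) :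
    weightedPerimeter δ (c, c) = 2 * c ^ (1 + δ) := by
  rw [weightedPerimeter, Real.rpow_one_add' hc (by linarith)]
  ring

lemma rpow_le_one_add_rpow_mul_div (hδ : 0 < δ) (hδ₁ : δ ≤ 1) {M y : ℝ} (hM : 0 < M)
    (hy : 0 ≤ y) : y ^ δ ≤ (1 + M ^ (1 / δ) * y) / M := by
  have hz : 0 ≤ M ^ (1 / δ) * y := by positivity
  rw [le_div_iff₀' hM]
  calc M * y ^ δ = (M ^ (1 / δ) * y) ^ δ := by
        rw [Real.mul_rpow (by positivity) hy, ← Real.rpow_mul hM.le, one_div_mul_cancel hδ.ne',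
          Real.rpow_one]
    _ ≤ (1 + M ^ (1 / δ) * y) ^ δ := by gcongr; linarith
    _ ≤ (1 + M ^ (1 / δ) * y) ^ (1 : ℝ) := by gcongr; linarith
    _ = 1 + M ^ (1 / δ) * y := Real.rpow_one _

lemma weightedPerimeter_sub_le (hδ : 0 < δ) (hδ₁ : δ ≤ 1) {M u v c : ℝ} (hM : 0 < M)
    (hv : 0 ≤ v) (hvu : v ≤ u) (huc : u ≤ c) (hc : 0 < c) :
    weightedPerimeter δ (u, c - u) ≤
      2 / M * (c ^ (1 + δ) + M ^ (1 / δ) * (c ^ (1 + δ) - v ^ (1 + δ))) := by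
  set x := 1 - u / c with hx
  have hx0 : 0 ≤ x := sub_nonneg.2 ((div_le_one hc).2 huc)
  have hx1 : x ≤ 1 := sub_le_self _ (div_nonneg (hv.trans hvu) hc.le)
  have hcx : c - u = c * x := by rw [hx]; field_simp
  have hpow : c ^ (1 + δ) = c * c ^ δ := Real.rpow_one_add' hc.le (by linarith)
  have hxδ : x ≤ x ^ δ := Real.self_le_rpow_of_le_one hx0 hx1 hδ₁
  have hgap : c ^ (1 + δ) * x ≤ c ^ (1 + δ) - v ^ (1 + δ) := by
    have : v * v ^ δ ≤ u * c ^ δ := by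
      gcongr
      exacts [hv.trans hvu, hvu.trans huc]
    rw [hpow, Real.rpow_one_add' hv (by linarith), mul_right_comm, ← hcx]
    linarith
  calc weightedPerimeter δ (u, c - u) ≤ weightedPerimeter δ (c, c * x) := by
        rw [hcx]
        exact weightedPerimeter_mono hδ.le (hv.trans hvu) (by positivity) huc le_rfl
    _ = c ^ (1 + δ) * (x + x ^ δ) := by
        rw [weightedPerimeter, Real.mul_rpow hc.le hx0, hpow]
        ring
    _ ≤ c ^ (1 + δ) * (2 * ((1 + M ^ (1 / δ) * x) / M)) := by
        gcongr
        linarith [rpow_le_one_add_rpow_mul_div hδ hδ₁ hM hx0]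
    _ = 2 / M * (c ^ (1 + δ) + M ^ (1 / δ) * (c ^ (1 + δ) * x)) := by ring
    _ ≤ _ := by gcongr

lemma mul_le_rpow_mul_rpow_mul (hδ₁ : δ ≤ 1) {x y c : ℝ} (hx : 0 ≤ x) (hy : 0 ≤ y)
    (hxc : x ≤ c) : x * y ≤ c ^ (1 - δ) * (x ^ δ * y) :=
  calc x * y = x ^ (1 - δ) * x ^ δ * y := by
        rw [← Real.rpow_add' hx (by norm_num), sub_add_cancel, Real.rpow_one]
    _ ≤ c ^ (1 - δ) * x ^ δ * y := by gcongr
    _ = c ^ (1 - δ) * (x ^ δ * y) := mul_assoc _ _ _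

lemma area_le_mul_weightedPerimeter (hδ₁ : δ ≤ 1) {d : ℝ × ℝ} {c : ℝ} (h₁ : 0 ≤ d.1)
    (h₂ : 0 ≤ d.2) (h : d.1 ≤ c ∨ d.2 ≤ c) :
    d.1 * d.2 ≤ c ^ (1 - δ) * weightedPerimeter δ d := by
  have hc : 0 ≤ c := h.elim h₁.trans h₂.trans
  rw [weightedPerimeter, mul_add]
  rcases h with h | h
  · exact le_add_of_le_of_nonneg (mul_le_rpow_mul_rpow_mul hδ₁ h₁ h₂ h) (by positivity)
  · rw [mul_comm, mul_comm d.1 (_ ^ δ)]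
    exact le_add_of_nonneg_of_le (by positivity) (mul_le_rpow_mul_rpow_mul hδ₁ h₂ h₁ h)

end WeightedPerimeter

section Row

variable {δ M w h : ℝ} {s : ℕ → ℝ} {k m : ℕ}

lemma sum_Ico_le_mul_of_antitone (hs : Antitone s) (k m : ℕ) :
    ∑ j ∈ Finset.Ico k (k + m), s j ≤ m * s k := by
  simpa using Finset.sum_le_card_nsmul (Finset.Ico k (k + m)) s (s k) fun j hj =>
    hs (Finset.mem_Ico.1 hj).1

lemma mul_le_sum_Ico_of_antitone (hs : Antitone s) (k m : ℕ) :
    m * s (k + m) ≤ ∑ j ∈ Finset.Ico k (k + m), s j := by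
  simpa using Finset.card_nsmul_le_sum (Finset.Ico k (k + m)) s (s (k + m)) fun j hj =>
    hs (Finset.mem_Ico.1 hj).2.le

lemma exists_sum_Ico_le_lt {n : ℕ} (hw : 0 ≤ w) (hn : w < ∑ j ∈ Finset.Ico k (k + n), s j) :
    ∃ m < n, ∑ j ∈ Finset.Ico k (k + m), s j ≤ w ∧ w < ∑ j ∈ Finset.Ico k (k + (m + 1)), s j := by
  induction n with
  | zero => simp [hw.not_gt] at hn
  | succ n ih =>
    rcases le_or_gt (∑ j ∈ Finset.Ico k (k + n), s j) w with hle | hlt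
    · exact ⟨n, n.lt_succ_self, hle, hn⟩
    · obtain ⟨m, hm, hsum⟩ := ih hlt
      exact ⟨m, hm.trans n.lt_succ_self, hsum⟩

lemma nonneg_of_mem_rowLeftover (hs : ∀ j, 0 ≤ s j) (hanti : Antitone s) (hh : s k ≤ h)
    (hsw : s k ≤ w) (hw : ∑ j ∈ Finset.Ico k (k + m), s j ≤ w) :
    ∀ d ∈ rowLeftover s k m w h, 0 ≤ d.1 ∧ d.1 ≤ w ∧ 0 ≤ d.2 := by
  have hT : 0 ≤ ∑ j ∈ Finset.Ico k (k + m), s j := Finset.sum_nonneg fun j _ => hs j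
  simp only [rowLeftover, Multiset.mem_cons, Multiset.mem_map, Finset.mem_val]
  rintro d (rfl | rfl | ⟨j, hj, rfl⟩)
  · exact ⟨sub_nonneg.2 hw, sub_le_self _ hT, hs k⟩
  · exact ⟨(hs k).trans hsw, le_rfl, sub_nonneg.2 hh⟩
  · have hjk := hanti (Finset.mem_Ico.1 hj).1
    exact ⟨hs j, hjk.trans hsw, sub_nonneg.2 hjk⟩

lemma sum_area_rowLeftover (s : ℕ → ℝ) (k m : ℕ) (w h : ℝ) :
    ((rowLeftover s k m w h).map fun d => d.1 * d.2).sum =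
      w * h - ∑ j ∈ Finset.Ico k (k + m), s j ^ 2 := by
  have hslivers : ∑ j ∈ Finset.Ico k (k + m), s j * (s k - s j) =
      s k * ∑ j ∈ Finset.Ico k (k + m), s j - ∑ j ∈ Finset.Ico k (k + m), s j ^ 2 := by
    rw [Finset.mul_sum, ← Finset.sum_sub_distrib]
    exact Finset.sum_congr rfl fun j _ => by ring
  simp only [rowLeftover, Multiset.map_cons, Multiset.sum_cons, Multiset.map_map,
    Function.comp_def, Finset.sum_map_val, hslivers]
  ring

lemma sum_weightedPerimeter_rowLeftover_le (hδ : 0 < δ) (hδ₁ : δ ≤ 1) (hM : 0 < M)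
    (hs : ∀ j, 0 < s j) (hanti : Antitone s) (hh : s k ≤ h)
    (hw : ∑ j ∈ Finset.Ico k (k + m), s j ≤ w)
    (hgap : w ≤ ∑ j ∈ Finset.Ico k (k + m), s j + s k) :
    ((rowLeftover s k m w h).map (weightedPerimeter δ)).sum ≤
      weightedPerimeter δ (w, h) + 2 * s k ^ (1 + δ) + m * (2 / M * (s k ^ (1 + δ) +
        M ^ (1 / δ) * (s k ^ (1 + δ) - s (k + m) ^ (1 + δ)))) := by
  have hw0 : 0 ≤ w := (Finset.sum_nonneg fun j _ => (hs j).le).trans hw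
  have hend : weightedPerimeter δ (w - ∑ j ∈ Finset.Ico k (k + m), s j, s k) ≤
      2 * s k ^ (1 + δ) :=
    (weightedPerimeter_mono hδ.le (sub_nonneg.2 hw) (hs k).le (sub_le_iff_le_add'.2 hgap)
      le_rfl).trans_eq (weightedPerimeter_self hδ.le (hs k).le)
  have habove : weightedPerimeter δ (w, h - s k) ≤ weightedPerimeter δ (w, h) :=
    weightedPerimeter_mono hδ.le hw0 (sub_nonneg.2 hh) le_rfl (sub_le_self _ (hs k).le)
  have hslivers := Finset.sum_le_card_nsmul (Finset.Ico k (k + m))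
    (fun j => weightedPerimeter δ (s j, s k - s j)) _ fun j hj =>
      weightedPerimeter_sub_le hδ hδ₁ hM (hs (k + m)).le (hanti (Finset.mem_Ico.1 hj).2.le)
        (hanti (Finset.mem_Ico.1 hj).1) (hs k)
  rw [Nat.card_Ico, add_tsub_cancel_left, nsmul_eq_mul] at hslivers
  simp only [rowLeftover, Multiset.map_cons, Multiset.sum_cons, Multiset.map_map,
    Function.comp_def, Finset.sum_map_val]
  linarith

end Row

/-! ### Packing row by row -/

/-- The budget `n₀ f(n₀) + f(n₀) + ⋯ + f(k - 1)` which, up to a factor, bounds the total weighted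
perimeter left over after packing the squares with indices in `[n₀, k)`, where `f(j)` is the
weighted perimeter of the `j`-th square. -/
noncomputable def budget (f : ℕ → ℝ) (n₀ k : ℕ) : ℝ := n₀ * f n₀ + ∑ j ∈ Finset.Ico n₀ k, f j

/-- Quantitative slow decay of the sidelengths `s k`, `k ≥ n₀`, sufficient for packing the
corresponding squares row by row into a square of sidelength `a`: by `wide` some leftover rectangle
has both sides at least `M` times the next sidelength, and by `narrow` the sidelengths hardly vary
along a row. -/
structure SlowDecay (δ D M a : ℝ) (s : ℕ → ℝ) (n₀ : ℕ) : Prop where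
  δ_pos : 0 < δ
  δ_le_one : δ ≤ 1
  two_le_M : 2 ≤ M
  a_pos : 0 < a
  pos : ∀ k, 0 < s k
  anti : Antitone s
  doubling : ∀ k j, n₀ ≤ k → k ≤ j → j ≤ 2 * k → s k ^ (1 + δ) ≤ D * s j ^ (1 + δ)
  wide : ∀ k, n₀ ≤ k → (M * s k) ^ (1 - δ) * (7 * D / M * budget (fun j => s j ^ (1 + δ)) n₀ k) <
    a ^ 2 - ∑ j ∈ Finset.Ico n₀ k, s j ^ 2
  narrow : ∀ k, n₀ ≤ k → 2 * M ^ (1 / δ) * a ≤ k * s (2 * k)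
  init : weightedPerimeter δ (a, a) + n₀ * s n₀ ^ (1 + δ) / M ≤
    7 * D / M * (n₀ * s n₀ ^ (1 + δ))

/-- The invariant of the row by row packing algorithm: `L` lists the dimensions of the rectangles
left over after packing the squares with indices in `[n₀, k)`. -/
structure Leftover (δ D M a : ℝ) (s : ℕ → ℝ) (n₀ k : ℕ) (L : Multiset (ℝ × ℝ)) : Prop where
  le : n₀ ≤ k
  dims : ∀ d ∈ L, 0 ≤ d.1 ∧ d.1 ≤ a ∧ 0 ≤ d.2
  area : (L.map fun d => d.1 * d.2).sum = a ^ 2 - ∑ j ∈ Finset.Ico n₀ k, s j ^ 2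
  perimeter : (L.map (weightedPerimeter δ)).sum + k * s k ^ (1 + δ) / M ≤
    7 * D / M * budget (fun j => s j ^ (1 + δ)) n₀ k

lemma budget_add (f : ℕ → ℝ) {n₀ k : ℕ} (hk : n₀ ≤ k) (m : ℕ) :
    budget f n₀ (k + m) = budget f n₀ k + ∑ j ∈ Finset.Ico k (k + m), f j := by
  rw [budget, budget, add_assoc, Finset.sum_Ico_consecutive _ hk (Nat.le_add_right k m)]

/-- The weighted perimeter created by a row of `m` squares: the end piece costs `2 f`, the slivers
cost the second summand, and the third one prepays for the slivers of the later rows. -/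
lemma row_cost_le {M Λ f g k m : ℝ} (hM : 0 < M) (hMm : M ≤ 2 * m) (hΛ : 2 * Λ * m ≤ k)
    (hf : 0 ≤ f) (hgf : g ≤ f) :
    2 * f + m * (2 / M * (f + Λ * (f - g))) + (k + m) * g / M ≤ k * f / M + 7 * (m * f) / M := by
  have hend : 2 * f * M ≤ 2 * f * (2 * m) := by gcongr
  have hslivers : 2 * Λ * m * (f - g) ≤ k * (f - g) :=
    mul_le_mul_of_nonneg_right hΛ (sub_nonneg.2 hgf)
  have hnext : m * g ≤ m * f := mul_le_mul_of_nonneg_left hgf (by linarith)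
  have e : 2 * f + m * (2 / M * (f + Λ * (f - g))) + (k + m) * g / M =
      (2 * f * M + 2 * m * f + 2 * Λ * m * (f - g) + (k + m) * g) / M := by
    field_simp
    ring
  rw [e, ← add_div, div_le_div_iff_of_pos_right hM]
  linarith

namespace SlowDecay

variable {δ D M a : ℝ} {s : ℕ → ℝ} {n₀ k : ℕ} {L : Multiset (ℝ × ℝ)}

lemma M_pos (H : SlowDecay δ D M a s n₀) : 0 < M := two_pos.trans_le H.two_le_M

lemma antitone_rpow (H : SlowDecay δ D M a s n₀) : Antitone fun j => s j ^ (1 + δ) :=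
  fun i j hij => Real.rpow_le_rpow (H.pos j).le (H.anti hij) (by linarith [H.δ_pos])

lemma one_le_M_rpow (H : SlowDecay δ D M a s n₀) : 1 ≤ M ^ (1 / δ) :=
  Real.one_le_rpow (by linarith [H.two_le_M]) (one_div_nonneg.2 H.δ_pos.le)

lemma mul_rpow_le_mul_sum (H : SlowDecay δ D M a s n₀) {m : ℕ} (hk : n₀ ≤ k) (hmk : m ≤ k) :
    m * s k ^ (1 + δ) ≤ D * ∑ j ∈ Finset.Ico k (k + m), s j ^ (1 + δ) := by
  rw [Finset.mul_sum]
  simpa using Finset.card_nsmul_le_sum (Finset.Ico k (k + m)) (fun j => D * s j ^ (1 + δ))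
    (s k ^ (1 + δ)) fun j hj => H.doubling k j hk (Finset.mem_Ico.1 hj).1
      (by have := Finset.mem_Ico.1 hj; omega)

lemma exists_wide (H : SlowDecay δ D M a s n₀) (hL : Leftover δ D M a s n₀ k L) :
    ∃ d ∈ L, M * s k ≤ d.1 ∧ M * s k ≤ d.2 := by
  by_contra! hcon
  have hsk := H.pos k
  have hM := H.M_pos
  have hthin : ∀ d ∈ L, d.1 * d.2 ≤ (M * s k) ^ (1 - δ) * weightedPerimeter δ d := fun d hd => by
    refine area_le_mul_weightedPerimeter H.δ_le_one (hL.dims d hd).1 (hL.dims d hd).2.2 ?_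
    exact (le_or_gt (M * s k) d.1).symm.imp le_of_lt fun h => (hcon d hd h).le
  have hperimeter : (L.map (weightedPerimeter δ)).sum ≤
      7 * D / M * budget (fun j => s j ^ (1 + δ)) n₀ k := by
    have : 0 ≤ k * s k ^ (1 + δ) / M := by positivity
    linarith [hL.perimeter]
  refine (H.wide k hL.le).not_ge ?_
  calc a ^ 2 - ∑ j ∈ Finset.Ico n₀ k, s j ^ 2 = (L.map fun d => d.1 * d.2).sum := hL.area.symm
    _ ≤ (L.map fun d => (M * s k) ^ (1 - δ) * weightedPerimeter δ d).sum :=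
        Multiset.sum_map_le_sum_map _ _ hthin
    _ = (M * s k) ^ (1 - δ) * (L.map (weightedPerimeter δ)).sum := Multiset.sum_map_mul_left
    _ ≤ _ := by gcongr

lemma exists_row_length (H : SlowDecay δ D M a s n₀) (hk : n₀ ≤ k) {w : ℝ} (hw : M * s k ≤ w)
    (hwa : w ≤ a) : ∃ m : ℕ, M ≤ 2 * m ∧ 2 * M ^ (1 / δ) * m ≤ k ∧
      ∑ j ∈ Finset.Ico k (k + m), s j ≤ w ∧ w ≤ ∑ j ∈ Finset.Ico k (k + m), s j + s k := by
  have hM := H.two_le_M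
  have hsk := H.pos k
  have ha := H.a_pos
  have hnarrow := H.narrow k hk
  have hΛ := H.one_le_M_rpow
  have hlong : w < ∑ j ∈ Finset.Ico k (k + k), s j := by
    have := mul_le_sum_Ico_of_antitone H.anti k k
    rw [← two_mul] at this ⊢
    nlinarith
  have hw0 : 0 ≤ w := le_trans (by positivity) hw
  obtain ⟨m, hmk, hsum, hlt⟩ := exists_sum_Ico_le_lt hw0 hlong
  refine ⟨m, ?_, ?_, hsum, ?_⟩
  · have hupper := sum_Ico_le_mul_of_antitone H.anti k (m + 1)
    have hMm : M < (m + 1 : ℕ) := lt_of_mul_lt_mul_right (hw.trans_lt (hlt.trans_le hupper)) hsk.le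
    push_cast at hMm
    linarith
  · refine le_of_mul_le_mul_right ?_ (H.pos (2 * k))
    calc 2 * M ^ (1 / δ) * m * s (2 * k) ≤ 2 * M ^ (1 / δ) * (m * s (k + m)) := by
          rw [mul_assoc]
          gcongr
          exact H.anti (by omega)
      _ ≤ 2 * M ^ (1 / δ) * a := by
          gcongr
          exact (mul_le_sum_Ico_of_antitone H.anti k m).trans (hsum.trans hwa)
      _ ≤ k * s (2 * k) := hnarrow
  · rw [← add_assoc, Finset.sum_Ico_succ_top (by omega)] at hlt
    linarith [H.anti (show k ≤ k + m by omega)]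

lemma leftover_singleton (H : SlowDecay δ D M a s n₀) : Leftover δ D M a s n₀ n₀ {(a, a)} where
  le := le_rfl
  dims d hd := by
    obtain rfl := Multiset.mem_singleton.1 hd
    exact ⟨H.a_pos.le, le_rfl, H.a_pos.le⟩
  area := by simp [sq]
  perimeter := by simpa [budget] using H.init

lemma leftover_rowLeftover (H : SlowDecay δ D M a s n₀) {w h : ℝ} {m : ℕ}
    (hL : Leftover δ D M a s n₀ k ((w, h) ::ₘ L)) (hsw : s k ≤ w) (hsh : s k ≤ h)
    (hMm : M ≤ 2 * m) (hΛm : 2 * M ^ (1 / δ) * m ≤ k)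
    (hw : ∑ j ∈ Finset.Ico k (k + m), s j ≤ w)
    (hgap : w ≤ ∑ j ∈ Finset.Ico k (k + m), s j + s k) :
    Leftover δ D M a s n₀ (k + m) (rowLeftover s k m w h + L) where
  le := le_add_right hL.le
  dims d hd := by
    obtain ⟨-, hwa, -⟩ := hL.dims _ (Multiset.mem_cons_self _ _)
    rcases Multiset.mem_add.1 hd with hd | hd
    · obtain ⟨h₁, h₁w, h₂⟩ :=
        nonneg_of_mem_rowLeftover (fun j => (H.pos j).le) H.anti hsh hsw hw d hd
      exact ⟨h₁, h₁w.trans hwa, h₂⟩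
    · exact hL.dims d (Multiset.mem_cons_of_mem hd)
  area := by
    have hA := hL.area
    rw [Multiset.map_cons, Multiset.sum_cons] at hA
    rw [Multiset.map_add, Multiset.sum_add, sum_area_rowLeftover,
      ← Finset.sum_Ico_consecutive _ hL.le (Nat.le_add_right k m)]
    linarith
  perimeter := by
    have hM := H.M_pos
    have hΛ := H.one_le_M_rpow
    have hmk : m ≤ k := by
      have : (m : ℝ) ≤ k := by nlinarith
      exact_mod_cast this
    have hP := hL.perimeter
    have hrow := sum_weightedPerimeter_rowLeftover_le H.δ_pos H.δ_le_one hM H.pos H.anti hsh hw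
      hgap
    have hcost := row_cost_le hM hMm hΛm (Real.rpow_pos_of_pos (H.pos k) _).le
      (H.antitone_rpow (Nat.le_add_right k m))
    have hincome : 7 * (m * s k ^ (1 + δ)) / M ≤
        7 * D / M * ∑ j ∈ Finset.Ico k (k + m), s j ^ (1 + δ) := by
      rw [mul_div_right_comm, mul_div_right_comm 7 D, mul_assoc (7 / M)]
      exact mul_le_mul_of_nonneg_left (H.mul_rpow_le_mul_sum hL.le hmk) (by positivity)
    rw [Multiset.map_cons, Multiset.sum_cons] at hP
    rw [Multiset.map_add, Multiset.sum_add, budget_add _ hL.le, mul_add, Nat.cast_add]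
    linarith

lemma exists_row (H : SlowDecay δ D M a s n₀) (hL : Leftover δ D M a s n₀ k L) :
    ∃ (m : ℕ) (L' : Multiset (ℝ × ℝ)), 1 ≤ m ∧ Leftover δ D M a s n₀ (k + m) L' ∧
      ∀ N, k + m ≤ N → Packs s L' (Ico (k + m) N) → Packs s L (Ico k N) := by
  obtain ⟨⟨w, h⟩, hd, hw, hh⟩ := H.exists_wide hL
  obtain ⟨L, rfl⟩ := Multiset.exists_cons_of_mem hd
  obtain ⟨m, hMm, hΛm, hsum, hgap⟩ := H.exists_row_length hL.le hw (hL.dims _ hd).2.1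
  have hskM : s k ≤ M * s k := le_mul_of_one_le_left (H.pos k).le (by linarith [H.two_le_M])
  have hm : (1 : ℝ) ≤ m := by linarith [H.two_le_M]
  exact ⟨m, _, by exact_mod_cast hm,
    H.leftover_rowLeftover hL (hskM.trans hw) (hskM.trans hh) hMm hΛm hsum hgap, fun N hN hpack =>
      hpack.of_row (fun j => (H.pos j).le) H.anti (hskM.trans hh) hN hsum⟩

lemma exists_packs (H : SlowDecay δ D M a s n₀) (hL : Leftover δ D M a s n₀ k L) (d : ℕ) :
    ∃ N, k + d ≤ N ∧ Packs s L (Ico k N) := by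
  induction d generalizing k L with
  | zero => exact ⟨k, le_rfl, by simpa using Packs.empty s L⟩
  | succ d ih =>
    obtain ⟨m, L', hm, hL', hpack⟩ := H.exists_row hL
    obtain ⟨N, hN, hN'⟩ := ih hL'
    exact ⟨N, by omega, hpack N (by omega) hN'⟩

theorem exists_perfectlyPacked (H : SlowDecay δ D M a s n₀)
    (harea : HasSum (fun k : {k // n₀ ≤ k} => s k ^ 2) (a ^ 2)) :
    ∃ (c : ℝ × ℝ) (pos : {k // n₀ ≤ k} → ℝ × ℝ),
      PerfectlyPacked (fun k => square (pos k) (s k)) (square c a) := by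
  have hs : ∀ k : {k // n₀ ≤ k}, 0 ≤ s k := fun k => (H.pos k).le
  obtain ⟨pos, hpos⟩ := IsPlacement.exists_univ_of_forall_finset
    (s := fun k : {k // n₀ ≤ k} => s k) (R := ⟨0, (a, a)⟩) ⟨H.a_pos.le, H.a_pos.le⟩ hs fun F => by
      obtain ⟨N, hN, hpack⟩ := H.exists_packs H.leftover_singleton (F.sup (fun k => (k : ℕ)) + 1)
      obtain ⟨pos, hpos⟩ := hpack [⟨0, (a, a)⟩] rfl (List.pairwise_singleton _ _)
      refine ⟨_, hpos.comp_injective Subtype.val_injective fun k hk => ⟨k.2, ?_⟩⟩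
      have := Finset.le_sup (f := fun k : {k // n₀ ≤ k} => (k : ℕ)) hk
      omega
  exact ⟨0, pos, hpos.perfectlyPacked hs H.a_pos.le harea⟩

end SlowDecay

/-! ### Power sums and decay of the sidelengths -/

section PowerSums

variable {n k : ℕ}

lemma sum_Ico_rpow_le {r : ℝ} (hr : r ≤ 0) (hr₁ : r ≠ -1) (hn : 1 < n) (hnk : n ≤ k) :
    ∑ j ∈ Finset.Ico n k, (j : ℝ) ^ r ≤
      (((k : ℝ) - 1) ^ (r + 1) - ((n : ℝ) - 1) ^ (r + 1)) / (r + 1) := by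
  obtain ⟨n, rfl⟩ := Nat.exists_eq_add_one.2 (zero_lt_one.trans hn)
  obtain ⟨k, rfl⟩ := Nat.exists_eq_add_one.2 ((zero_lt_one.trans hn).trans_le hnk)
  have hn0 : (0 : ℝ) < n := Nat.cast_pos.2 (by omega)
  have hnk' : (n : ℝ) ≤ k := by exact_mod_cast Nat.le_of_add_le_add_right hnk
  have hanti : AntitoneOn (fun x : ℝ => x ^ r) (Icc n k) := fun x hx y _ hxy =>
    Real.rpow_le_rpow_of_nonpos (hn0.trans_le hx.1) hxy hr
  have hint := hanti.sum_le_integral_Ico (Nat.le_of_add_le_add_right hnk)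
  rw [integral_rpow (.inr ⟨hr₁, by rw [uIcc_of_le hnk']; exact fun h => hn0.not_ge h.1⟩),
    Finset.sum_Ico_add' (fun j : ℕ => (j : ℝ) ^ r)] at hint
  simpa using hint

lemma sum_Ico_rpow_neg_le {u : ℝ} (hu : 1 < u) (hu₂ : u ≤ 2) (hn : 1 < n) (k : ℕ) :
    ∑ j ∈ Finset.Ico n k, (j : ℝ) ^ (-u) ≤ 2 / (u - 1) * (n : ℝ) ^ (1 - u) := by
  have : 0 < u - 1 := by linarith
  have hn2 : (2 : ℝ) ≤ n := by exact_mod_cast hn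
  rcases lt_or_ge k n with hkn | hnk
  · rw [Finset.Ico_eq_empty_of_le hkn.le, Finset.sum_empty]
    positivity
  have hpred : ((n : ℝ) - 1) ^ (1 - u) ≤ 2 * (n : ℝ) ^ (1 - u) := by
    calc ((n : ℝ) - 1) ^ (1 - u) ≤ (2⁻¹ * n) ^ (1 - u) :=
          Real.rpow_le_rpow_of_nonpos (by linarith) (by linarith) (by linarith)
      _ = 2 ^ (u - 1) * (n : ℝ) ^ (1 - u) := by
          rw [Real.mul_rpow (by norm_num) n.cast_nonneg, Real.inv_rpow two_pos.le,
            ← Real.rpow_neg two_pos.le, neg_sub]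
      _ ≤ 2 * (n : ℝ) ^ (1 - u) := by
          gcongr
          exact Real.rpow_le_self_of_one_le one_le_two (by linarith)
  have hk0 : 0 ≤ ((k : ℝ) - 1) ^ (1 - u) := by
    have : (n : ℝ) ≤ k := by exact_mod_cast hnk
    exact Real.rpow_nonneg (by linarith) _
  refine (sum_Ico_rpow_le (by linarith) (by linarith) hn hnk).trans ?_
  rw [neg_add_eq_sub, ← neg_sub u 1, div_neg, ← neg_div, neg_sub, neg_sub, div_mul_eq_mul_div]
  gcongr
  linarith

lemma budget_le_mul {f : ℕ → ℝ} {C ε : ℝ} (hC : 0 ≤ C) (hε : 0 < ε) (hε₁ : ε ≤ 1) (hn : 1 < n)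
    (hnk : n ≤ k) (hfk : 0 ≤ f k)
    (hf : ∀ j, n ≤ j → j ≤ k → f j ≤ C * ((k : ℝ) / j) ^ (1 - ε) * f k) :
    budget f n k ≤ C * (1 + 1 / ε) * (k * f k) := by
  have hn0 : (0 : ℝ) < n := by exact_mod_cast zero_lt_one.trans hn
  have hnk' : (n : ℝ) ≤ k := by exact_mod_cast hnk
  have hk0 : (0 : ℝ) < k := hn0.trans_le hnk'
  have hsum : ∑ j ∈ Finset.Ico n k, (j : ℝ) ^ (ε - 1) ≤ (k : ℝ) ^ ε / ε := by
    have hn1 : (1 : ℝ) ≤ n := by exact_mod_cast hn.le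
    refine (sum_Ico_rpow_le (by linarith) (by linarith) hn hnk).trans ?_
    rw [sub_add_cancel]
    gcongr
    exact (sub_le_self _ (Real.rpow_nonneg (by linarith) _)).trans
      (Real.rpow_le_rpow (by linarith) (by linarith) hε.le)
  have hfirst : n * f n ≤ C * (k * f k) :=
    calc n * f n ≤ n * (C * ((k : ℝ) / n) ^ (1 - ε) * f k) := by gcongr; exact hf n le_rfl hnk
      _ ≤ n * (C * ((k : ℝ) / n) ^ (1 : ℝ) * f k) := by
          gcongr
          · exact (one_le_div hn0).2 hnk'
          · linarith
      _ = C * (k * f k) := by rw [Real.rpow_one]; field_simp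
  have hterm : ∀ j ∈ Finset.Ico n k, f j ≤ C * f k * (k : ℝ) ^ (1 - ε) * (j : ℝ) ^ (ε - 1) := by
    intro j hj
    obtain ⟨hnj, hjk⟩ := Finset.mem_Ico.1 hj
    refine (hf j hnj hjk.le).trans_eq ?_
    rw [Real.div_rpow hk0.le j.cast_nonneg, ← neg_sub 1 ε, Real.rpow_neg j.cast_nonneg]
    ring
  calc budget f n k ≤ C * (k * f k) +
        ∑ j ∈ Finset.Ico n k, C * f k * (k : ℝ) ^ (1 - ε) * (j : ℝ) ^ (ε - 1) :=
        add_le_add hfirst (Finset.sum_le_sum hterm)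
    _ ≤ C * (k * f k) + C * f k * (k : ℝ) ^ (1 - ε) * ((k : ℝ) ^ ε / ε) := by
        rw [← Finset.mul_sum]
        gcongr
    _ = C * (k * f k) + C * f k * ((k : ℝ) ^ (1 - ε) * (k : ℝ) ^ ε) / ε := by ring
    _ = C * (1 + 1 / ε) * (k * f k) := by
        rw [← Real.rpow_add hk0, sub_add_cancel, Real.rpow_one]
        ring

end PowerSums

/-- Up to a factor of `8`, the sequence `k ^ (1 - δ ^ 2 / 2) * s k ^ (1 + δ)` is increasing from
the index `n` on, which is exponentially large in terms of `1 / δ`. Unlike `SlowDecay`, which it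
implies for `M = exp (5 / δ ^ 3)`, the condition does not involve the large square. -/
structure ModerateDecay (δ : ℝ) (s : ℕ → ℝ) (n : ℕ) : Prop where
  δ_pos : 0 < δ
  δ_le_half : δ ≤ 1 / 2
  pos : ∀ k, 0 < s k
  anti : Antitone s
  exp_le : Real.exp (16 / δ ^ 4) ≤ n
  rpow_le : ∀ j k, n ≤ j → j ≤ k →
    s j ^ (1 + δ) ≤ 8 * ((k : ℝ) / j) ^ (1 - δ ^ 2 / 2) * s k ^ (1 + δ)

lemma mul_lt_exp_of_twenty_le {y : ℝ} (hy : 20 ≤ y) : 103220 * y < Real.exp y := by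
  have hy9 : (20 : ℝ) ^ 9 ≤ y ^ 9 := by gcongr
  have hfactorial : ((10).factorial : ℝ) = 3628800 := by norm_num [Nat.factorial]
  calc 103220 * y < (20 : ℝ) ^ 9 * y / (10).factorial := by
        rw [hfactorial, lt_div_iff₀ (by norm_num)]
        linarith
    _ ≤ y ^ 9 * y / (10).factorial := by gcongr
    _ = y ^ 10 / (10).factorial := by ring
    _ ≤ Real.exp y := Real.pow_div_factorial_le_exp y (by linarith) 10

namespace ModerateDecay

variable {δ a : ℝ} {s : ℕ → ℝ} {n j k : ℕ}

lemma one_lt (H : ModerateDecay δ s n) : 1 < n := by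
  have := H.δ_pos
  have : (1 : ℝ) < n := (Real.one_lt_exp_iff.2 (by positivity)).trans_le H.exp_le
  exact_mod_cast this

lemma cast_pos (H : ModerateDecay δ s n) (hk : n ≤ k) : (0 : ℝ) < k := by
  exact_mod_cast (zero_lt_one.trans H.one_lt).trans_le hk

lemma rpow_le_mul_div (H : ModerateDecay δ s n) (hj : n ≤ j) (hjk : j ≤ k) :
    s j ^ (1 + δ) ≤ 8 * ((k : ℝ) / j) * s k ^ (1 + δ) := by
  have hkj : 1 ≤ (k : ℝ) / j := (one_le_div (H.cast_pos hj)).2 (by exact_mod_cast hjk)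
  have hsk := Real.rpow_pos_of_pos (H.pos k) (1 + δ)
  refine (H.rpow_le j k hj hjk).trans ?_
  gcongr
  exact Real.rpow_le_self_of_one_le hkj (by linarith [sq_nonneg δ])

lemma le_mul_div (H : ModerateDecay δ s n) (hj : n ≤ j) (hjk : j ≤ k) :
    s j ≤ 8 * ((k : ℝ) / j) * s k := by
  have hδ : 0 < 1 + δ := by linarith [H.δ_pos]
  have hkj : 1 ≤ (k : ℝ) / j := (one_le_div (H.cast_pos hj)).2 (by exact_mod_cast hjk)
  have hsk := H.pos k
  refine (Real.rpow_le_rpow_iff (H.pos j).le (by positivity) hδ).1 ?_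
  refine (H.rpow_le_mul_div hj hjk).trans ?_
  rw [Real.mul_rpow (by positivity) hsk.le]
  gcongr
  exact Real.self_le_rpow_of_one_le (by linarith) (by linarith [H.δ_pos])

lemma div_le_two_mul (H : ModerateDecay δ s n) (hk : n ≤ k) : s k / 16 ≤ s (2 * k) := by
  have h := H.le_mul_div hk (show k ≤ 2 * k by omega)
  rw [Nat.cast_mul, mul_div_cancel_right₀ _ (H.cast_pos hk).ne'] at h
  push_cast at h
  linarith

lemma mul_sq_le_sum_Ico (H : ModerateDecay δ s n) (hk : n ≤ k) :
    k * (s k / 16) ^ 2 ≤ ∑ j ∈ Finset.Ico k (k + k), s j ^ 2 := by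
  have hanti : Antitone fun j => s j ^ 2 := fun i j hij =>
    pow_le_pow_left₀ (H.pos j).le (H.anti hij) 2
  refine le_trans ?_ (mul_le_sum_Ico_of_antitone hanti k k)
  have := (H.pos k).le
  rw [← two_mul]
  gcongr
  exact H.div_le_two_mul hk

lemma budget_le (H : ModerateDecay δ s n) (hk : n ≤ k) :
    budget (fun j => s j ^ (1 + δ)) n k ≤ 18 / δ ^ 2 * (k * s k ^ (1 + δ)) := by
  have hδ := H.δ_pos
  have hδ2 : δ ^ 2 ≤ 1 / 4 := by nlinarith [H.δ_le_half]
  have hsk := H.pos k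
  refine (budget_le_mul (by norm_num) (by positivity) (by linarith) H.one_lt hk
    (Real.rpow_pos_of_pos hsk _).le fun j hj hjk => H.rpow_le j k hj hjk).trans ?_
  gcongr
  field_simp
  linarith

end ModerateDecay

section SubtypeSums

variable {f : ℕ → ℝ} {A B : ℝ} {n : ℕ}

lemma sum_Ico_le_of_hasSum_subtype (hf : ∀ m, 0 ≤ f m)
    (h : HasSum (fun m : {m // n ≤ m} => f m) A) (k : ℕ) : ∑ j ∈ Finset.Ico n k, f j ≤ A := by
  rw [← Finset.sum_subtype_of_mem f fun j hj => (Finset.mem_Ico.1 hj).1]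
  exact sum_le_hasSum _ (fun m _ => hf m) h

lemma le_of_hasSum_subtype_of_sum_Ico_le (hf : ∀ m, 0 ≤ f m)
    (h : HasSum (fun m : {m // n ≤ m} => f m) A) (hB : ∀ k, ∑ j ∈ Finset.Ico n k, f j ≤ B) :
    A ≤ B := by
  refine hasSum_le_of_sum_le h fun u => ?_
  refine (Finset.sum_map u (Function.Embedding.subtype _) f).symm.trans_le ?_
  refine (Finset.sum_le_sum_of_subset_of_nonneg (fun j hj => ?_) fun j _ _ => hf j).trans
    (hB ((u.map (Function.Embedding.subtype _)).sup id + 1))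
  obtain ⟨i, -, rfl⟩ := Finset.mem_map.1 hj
  exact Finset.mem_Ico.2 ⟨i.2, Nat.lt_succ_of_le (Finset.le_sup (f := id) hj)⟩

end SubtypeSums

namespace ModerateDecay

variable {δ a : ℝ} {s : ℕ → ℝ} {n k : ℕ}

/-- All constants are compared with powers of `q = n ^ (1 / 32)`: for `M = exp (5 / δ ^ 3)` one has
`M ≤ q ^ 5` and `M ^ (1 / δ) ≤ q ^ 10`, while the large square has sidelength at most
`q ^ 18 * s n`. -/
lemma exists_pow_eq (H : ModerateDecay δ s n) : ∃ q : ℝ,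
    2 ^ 8 ≤ q ∧ q ^ 32 = n ∧ Real.exp (1 / (2 * δ ^ 4)) ≤ q ∧ 64 * Real.log n ≤ q ^ 4 := by
  have hδ := H.δ_pos
  have hδ4 : δ ^ 4 ≤ (1 / 2) ^ 4 := pow_le_pow_left₀ hδ.le H.δ_le_half 4
  have hn : (0 : ℝ) ≤ n := n.cast_nonneg
  set q : ℝ := (n : ℝ) ^ ((32 : ℕ) : ℝ)⁻¹
  have hq0 : 0 ≤ q := Real.rpow_nonneg hn _
  have hqn : q ^ 32 = n := Real.rpow_inv_natCast_pow hn (by norm_num)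
  have hexp : Real.exp (1 / (2 * δ ^ 4)) ≤ q := by
    refine (pow_le_pow_iff_left₀ (Real.exp_pos _).le hq0 (by norm_num : 32 ≠ 0)).1 ?_
    rw [hqn, ← Real.exp_nat_mul]
    refine le_of_eq_of_le ?_ H.exp_le
    congr 1
    push_cast
    field_simp
    norm_num
  have hq8 : 2 ^ 8 ≤ q := by
    refine le_trans ?_ hexp
    have h2 : (2 : ℝ) ≤ Real.exp 1 := by linarith [Real.add_one_le_exp 1]
    calc (2 : ℝ) ^ 8 ≤ Real.exp 1 ^ 8 := by gcongr
      _ = Real.exp 8 := by rw [← Real.exp_nat_mul]; norm_num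
      _ ≤ _ := Real.exp_le_exp.2 (by rw [le_div_iff₀ (by positivity)]; linarith)
  refine ⟨q, hq8, hqn, hexp, ?_⟩
  calc 64 * Real.log n = 2048 * Real.log q := by
        rw [← hqn, Real.log_pow]
        push_cast
        ring
    _ ≤ 2048 * q := by gcongr; exact Real.log_le_self hq0
    _ ≤ (2 ^ 8) ^ 3 * q := by gcongr; norm_num
    _ ≤ q ^ 3 * q := by gcongr
    _ = q ^ 4 := by ring

lemma exp_mul_rpow_mul_budget_lt (H : ModerateDecay δ s n) (hk : n ≤ k) :
    (Real.exp (5 / δ ^ 3) * s k) ^ (1 - δ) *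
      (7 * 16 / Real.exp (5 / δ ^ 3) * budget (fun j => s j ^ (1 + δ)) n k) <
    k * (s k / 16) ^ 2 := by
  have hδ := H.δ_pos
  have hs := H.pos k
  have hk0 := H.cast_pos hk
  have hδ2 : 20 ≤ 5 / δ ^ 2 := by
    rw [le_div_iff₀ (by positivity)]
    nlinarith [H.δ_le_half]
  have hM : Real.exp (5 / δ ^ 3) ^ (1 - δ) / Real.exp (5 / δ ^ 3) = (Real.exp (5 / δ ^ 2))⁻¹ := by
    rw [← Real.exp_mul, ← Real.exp_sub, ← Real.exp_neg]
    congr 1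
    field_simp
    ring
  have hsq : s k ^ (1 - δ) * s k ^ (1 + δ) = s k ^ 2 := by
    rw [← Real.rpow_add hs, ← Real.rpow_natCast]
    congr 1
    push_cast
    ring
  rw [Real.mul_rpow (Real.exp_pos _).le hs.le]
  set M := Real.exp (5 / δ ^ 3)
  calc M ^ (1 - δ) * s k ^ (1 - δ) * (7 * 16 / M * budget (fun j => s j ^ (1 + δ)) n k)
      ≤ M ^ (1 - δ) * s k ^ (1 - δ) * (7 * 16 / M * (18 / δ ^ 2 * (k * s k ^ (1 + δ)))) := by
        gcongr
        exact H.budget_le hk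
    _ = 2016 / δ ^ 2 * (M ^ (1 - δ) / M) * (k * (s k ^ (1 - δ) * s k ^ (1 + δ))) := by ring
    _ = 2016 / δ ^ 2 / Real.exp (5 / δ ^ 2) * (k * s k ^ 2) := by rw [hM, hsq]; rfl
    _ < 1 / 256 * (k * s k ^ 2) := by
        refine mul_lt_mul_of_pos_right ?_ (by positivity)
        rw [div_lt_iff₀ (Real.exp_pos _)]
        have hinv : 0 ≤ 1 / δ ^ 2 := by positivity
        linear_combination 1 / 256 * mul_lt_exp_of_twenty_le hδ2 + 1 / 64 * hinv
    _ = k * (s k / 16) ^ 2 := by ring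

lemma wide (H : ModerateDecay δ s n) (hk : n ≤ k)
    (hlow : ∀ k, ∑ j ∈ Finset.Ico n k, s j ^ 2 ≤ a ^ 2) :
    (Real.exp (5 / δ ^ 3) * s k) ^ (1 - δ) *
      (7 * 16 / Real.exp (5 / δ ^ 3) * budget (fun j => s j ^ (1 + δ)) n k) <
    a ^ 2 - ∑ j ∈ Finset.Ico n k, s j ^ 2 := by
  refine (H.exp_mul_rpow_mul_budget_lt hk).trans_le ((H.mul_sq_le_sum_Ico hk).trans ?_)
  have h := hlow (k + k)
  rw [← Finset.sum_Ico_consecutive _ hk (Nat.le_add_right k k)] at h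
  linarith

lemma narrow (H : ModerateDecay δ s n) (hk : n ≤ k) {q : ℝ} (hq : 2 ^ 8 ≤ q) (hqn : q ^ 32 = n)
    (hexp : Real.exp (1 / (2 * δ ^ 4)) ≤ q) (ha : a ≤ q ^ 18 * s n) :
    2 * Real.exp (5 / δ ^ 3) ^ (1 / δ) * a ≤ k * s (2 * k) := by
  have hδ := H.δ_pos
  have hn := H.cast_pos le_rfl
  have hsn := H.pos n
  have hM : Real.exp (5 / δ ^ 3) ^ (1 / δ) ≤ q ^ 10 := by
    calc Real.exp (5 / δ ^ 3) ^ (1 / δ) = Real.exp (1 / (2 * δ ^ 4)) ^ 10 := by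
          rw [← Real.exp_mul, ← Real.exp_nat_mul]
          congr 1
          push_cast
          field_simp
          norm_num
      _ ≤ q ^ 10 := by gcongr
  have hdecay := H.le_mul_div le_rfl (show n ≤ 2 * k by omega)
  rw [mul_div_assoc', div_mul_eq_mul_div, le_div_iff₀ hn] at hdecay
  push_cast at hdecay
  calc 2 * Real.exp (5 / δ ^ 3) ^ (1 / δ) * a
      ≤ 2 * Real.exp (5 / δ ^ 3) ^ (1 / δ) * (q ^ 18 * s n) := by gcongr
    _ ≤ 2 * q ^ 10 * (q ^ 18 * s n) := by gcongr
    _ ≤ (2 ^ 8) ^ 4 / 16 * q ^ 10 * (q ^ 18 * s n) := by gcongr; norm_num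
    _ ≤ q ^ 4 / 16 * q ^ 10 * (q ^ 18 * s n) := by gcongr
    _ = s n * q ^ 32 / 16 := by ring
    _ ≤ k * s (2 * k) := by
        rw [hqn]
        linarith

lemma init (H : ModerateDecay δ s n) {q : ℝ} (hq : 2 ^ 8 ≤ q) (hqn : q ^ 32 = n)
    (hexp : Real.exp (1 / (2 * δ ^ 4)) ≤ q) (ha : 0 ≤ a) (haq : a ≤ q ^ 18 * s n) :
    weightedPerimeter δ (a, a) + n * s n ^ (1 + δ) / Real.exp (5 / δ ^ 3) ≤
      7 * 16 / Real.exp (5 / δ ^ 3) * (n * s n ^ (1 + δ)) := by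
  have hδ := H.δ_pos
  have hδ₁ := H.δ_le_half
  have hsn := H.pos n
  have hM : Real.exp (5 / δ ^ 3) ≤ q ^ 5 := by
    calc Real.exp (5 / δ ^ 3) ≤ Real.exp (1 / (2 * δ ^ 4)) ^ 5 := by
          rw [← Real.exp_nat_mul]
          gcongr
          rw [mul_one_div, div_le_div_iff₀ (by positivity) (by positivity)]
          push_cast
          nlinarith [pow_pos hδ 3]
      _ ≤ q ^ 5 := by gcongr
  have hpow : (q ^ 18) ^ (1 + δ) ≤ q ^ 27 := by
    calc (q ^ 18) ^ (1 + δ) ≤ (q ^ 18) ^ (3 / 2 : ℝ) :=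
          Real.rpow_le_rpow_of_exponent_le (one_le_pow₀ (by linarith)) (by linarith)
      _ = q ^ 27 := by
          rw [← Real.rpow_natCast, ← Real.rpow_mul (by linarith), ← Real.rpow_natCast]
          norm_num
  have hmain : Real.exp (5 / δ ^ 3) * a ^ (1 + δ) ≤ n * s n ^ (1 + δ) := by
    calc Real.exp (5 / δ ^ 3) * a ^ (1 + δ) ≤ q ^ 5 * (q ^ 18 * s n) ^ (1 + δ) := by gcongr
      _ = q ^ 5 * ((q ^ 18) ^ (1 + δ) * s n ^ (1 + δ)) := by
          rw [Real.mul_rpow (by positivity) hsn.le]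
      _ ≤ q ^ 5 * (q ^ 27 * s n ^ (1 + δ)) := by gcongr
      _ = n * s n ^ (1 + δ) := by rw [← hqn]; ring
  have : 0 ≤ n * s n ^ (1 + δ) := by positivity
  rw [weightedPerimeter_self hδ.le ha, div_mul_eq_mul_div, le_div_iff₀ (Real.exp_pos _), add_mul,
    div_mul_cancel₀ _ (Real.exp_pos _).ne']
  linarith

theorem slowDecay (H : ModerateDecay δ s n) (ha : 0 < a)
    (hlow : ∀ k, ∑ j ∈ Finset.Ico n k, s j ^ 2 ≤ a ^ 2)
    (hup : a ^ 2 ≤ 64 * (n * Real.log n) * s n ^ 2) :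
    SlowDecay δ 16 (Real.exp (5 / δ ^ 3)) a s n := by
  obtain ⟨q, hq, hqn, hexp, hlog⟩ := H.exists_pow_eq
  have hδ := H.δ_pos
  have hsn := H.pos n
  have haq : a ≤ q ^ 18 * s n := by
    refine (sq_le_sq₀ ha.le (by positivity)).1 (hup.trans ?_)
    calc 64 * (n * Real.log n) * s n ^ 2 = q ^ 32 * (64 * Real.log n) * s n ^ 2 := by
          rw [← hqn]
          ring
      _ ≤ q ^ 32 * q ^ 4 * s n ^ 2 := by gcongr
      _ = (q ^ 18 * s n) ^ 2 := by ring
  refine ⟨hδ, by linarith [H.δ_le_half], ?_, ha, H.pos, H.anti, fun k j hk hkj hj => ?_,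
    fun k hk => H.wide hk hlow, fun k hk => H.narrow hk hq hqn hexp haq,
    H.init hq hqn hexp ha.le haq⟩
  · have h1 : 1 ≤ 5 / δ ^ 3 := by
      rw [le_div_iff₀ (by positivity)]
      linarith [pow_le_one₀ (n := 3) hδ.le (by linarith [H.δ_le_half])]
    linarith [Real.add_one_le_exp (5 / δ ^ 3)]
  · have hratio : (j : ℝ) / k ≤ 2 := by
      rw [div_le_iff₀ (H.cast_pos hk)]
      exact_mod_cast hj
    have := Real.rpow_pos_of_pos (H.pos j) (1 + δ)
    calc s k ^ (1 + δ) ≤ 8 * ((j : ℝ) / k) * s j ^ (1 + δ) := H.rpow_le_mul_div hk hkj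
      _ ≤ 8 * 2 * s j ^ (1 + δ) := by gcongr
      _ = 16 * s j ^ (1 + δ) := by ring

theorem exists_perfectlyPacked (H : ModerateDecay δ s n)
    (hsum : Summable fun k : {k // n ≤ k} => s k ^ 2)
    (htail : ∀ k, ∑ j ∈ Finset.Ico n k, s j ^ 2 ≤ 64 * (n * Real.log n) * s n ^ 2) :
    ∃ (c : ℝ × ℝ) (pos : {k // n ≤ k} → ℝ × ℝ),
      PerfectlyPacked (fun k => square (pos k) (s k))
        (square c (√(∑' k : {k // n ≤ k}, s k ^ 2))) := by
  have hsq : ∀ k, 0 ≤ s k ^ 2 := fun k => sq_nonneg (s k)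
  have hA : 0 < ∑' k : {k // n ≤ k}, s k ^ 2 :=
    hsum.tsum_pos (fun k => hsq k) ⟨n, le_rfl⟩ (pow_pos (H.pos n) 2)
  have hsqrt := Real.sq_sqrt hA.le
  refine SlowDecay.exists_perfectlyPacked (H.slowDecay (Real.sqrt_pos.2 hA) ?_ ?_)
    (by rw [hsqrt]; exact hsum.hasSum)
  · rw [hsqrt]
    exact sum_Ico_le_of_hasSum_subtype hsq hsum.hasSum
  · rw [hsqrt]
    exact le_of_hasSum_subtype_of_sum_Ico_le hsq hsum.hasSum htail

end ModerateDecay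

/-! ### Primes -/

section Primes

lemma nthPrime_prime (n : ℕ) : (nthPrime n).Prime := Nat.prime_nth_prime _

lemma nthPrime_monotone : Monotone nthPrime := fun _ _ h =>
  Nat.nth_monotone Nat.infinite_setOfPred_prime (Nat.sub_le_sub_right h 1)

lemma lt_nthPrime (n : ℕ) : n < nthPrime n := by
  have := Nat.add_two_le_nth_prime (n - 1)
  unfold nthPrime
  omega

lemma nthPrime_pos (n : ℕ) : (0 : ℝ) < nthPrime n := by
  exact_mod_cast (nthPrime_prime n).pos

lemma primeCounting_nthPrime {n : ℕ} (hn : 1 ≤ n) : Nat.primeCounting (nthPrime n) = n := by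
  have h : Nat.count Nat.Prime (nthPrime n) = n - 1 := Nat.primeCounting'_nth_eq (n - 1)
  rw [Nat.primeCounting, Nat.primeCounting', Nat.count_succ, h, if_pos (nthPrime_prime n)]
  omega

lemma log_le_sqrt {x : ℝ} (hx : 0 < x) : Real.log x ≤ √x := by
  have hsqrt : 0 < √x := Real.sqrt_pos.2 hx
  have h := Real.log_le_sub_one_of_pos (half_pos hsqrt)
  rw [Real.log_div hsqrt.ne' two_ne_zero, Real.log_sqrt hx.le] at h
  linarith [Real.log_two_lt_d9]

lemma log_le_mul_rpow_div {x y ε : ℝ} (hx : 0 < x) (hxy : x ≤ y) (hε : 0 < ε)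
    (hlog : 1 / ε ≤ Real.log x) : Real.log y ≤ Real.log x * (y / x) ^ ε := by
  have hR : 1 ≤ y / x := (one_le_div hx).2 hxy
  have hL : 1 ≤ Real.log x * ε := (div_le_iff₀ hε).1 hlog
  have hexp := Real.add_one_le_exp (Real.log (y / x) * ε)
  rw [← Real.rpow_def_of_pos (by linarith)] at hexp
  calc Real.log y = Real.log (y / x) + Real.log x := by
        rw [Real.log_div (by linarith) hx.ne', sub_add_cancel]
    _ ≤ Real.log x * ε * Real.log (y / x) + Real.log x := by
        gcongr
        exact le_mul_of_one_le_left (Real.log_nonneg hR) hL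
    _ = Real.log x * (Real.log (y / x) * ε + 1) := by ring
    _ ≤ Real.log x * (y / x) ^ ε := by
        gcongr
        exact (one_div_pos.2 hε).le.trans hlog

lemma mul_log_nthPrime_le {n : ℕ} (hn : 1 ≤ n) :
    n * Real.log (nthPrime n) ≤ 4 * nthPrime n := by
  have hp : (1 : ℝ) < nthPrime n := by exact_mod_cast (nthPrime_prime n).one_lt
  have hpi := Chebyshev.pi_le_log4_mul_div hp
  rw [Nat.floor_natCast, primeCounting_nthPrime hn] at hpi
  have hp0 := nthPrime_pos n
  set p : ℝ := (nthPrime n : ℝ)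
  have hlog : 0 < Real.log p := Real.log_pos hp
  rw [Real.log_sqrt hp0.le, Real.log_four_eq] at hpi
  calc n * Real.log p ≤ (2 * Real.log 2 * p / (Real.log p / 2) + √p) * Real.log p := by gcongr
    _ = 4 * Real.log 2 * p + √p * Real.log p := by field_simp; ring
    _ ≤ 4 * 0.7 * p + √p * √p := by
        gcongr
        · linarith [Real.log_two_lt_d9]
        · exact log_le_sqrt hp0
    _ ≤ 4 * p := by rw [Real.mul_self_sqrt hp0.le]; linarith

lemma nthPrime_le_mul_log {n : ℕ} (hn : 1000 ≤ n) :
    (nthPrime n : ℝ) ≤ 2 * n * Real.log (nthPrime n) := by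
  have hpsi := (Chebyshev.psi_ge (nthPrime n)).trans
    (Chebyshev.psi_le_primeCounting_mul_log (nthPrime n))
  rw [primeCounting_nthPrime (by omega)] at hpsi
  have hp : (1000 : ℝ) ≤ nthPrime n := by exact_mod_cast hn.trans (lt_nthPrime n).le
  set p : ℝ := (nthPrime n : ℝ)
  have hlog : Real.log (p + 1) ≤ (p + 1) / 16 + 2 := by
    have h := Real.log_le_sub_one_of_pos (show 0 < (p + 1) / 2 ^ 4 by positivity)
    rw [Real.log_div (by linarith) (by norm_num), Real.log_pow] at h
    push_cast at h
    linarith [Real.log_two_lt_d9]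
  nlinarith [Real.log_two_gt_d9]

lemma nthPrime_div_rpow_le {j k : ℕ} (hj : 1000 ≤ j) (hjk : j ≤ k) {ε : ℝ} (hε : 0 < ε)
    (hlog : 1 / ε ≤ Real.log (nthPrime j)) :
    ((nthPrime k : ℝ) / nthPrime j) ^ (1 - ε) ≤ 8 * ((k : ℝ) / j) := by
  have hp := nthPrime_pos j
  have hpq : (nthPrime j : ℝ) ≤ nthPrime k := by exact_mod_cast nthPrime_monotone hjk
  have hlower := mul_log_nthPrime_le (show 1 ≤ j by omega)
  have hupper := nthPrime_le_mul_log (hj.trans hjk)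
  have : (0 : ℝ) < j := Nat.cast_pos.2 (by omega)
  have hlogk := log_le_mul_rpow_div hp hpq hε hlog
  set p : ℝ := (nthPrime j : ℝ)
  set q : ℝ := (nthPrime k : ℝ)
  have hR : 0 < q / p := div_pos (hp.trans_le hpq) hp
  rw [Real.rpow_sub hR, Real.rpow_one, div_le_iff₀ (Real.rpow_pos_of_pos hR _), div_le_iff₀ hp]
  calc q ≤ 2 * k * (Real.log p * (q / p) ^ ε) := hupper.trans (by gcongr)
    _ = 2 * (k / j) * (q / p) ^ ε * (j * Real.log p) := by field_simp
    _ ≤ 2 * (k / j) * (q / p) ^ ε * (4 * p) := by gcongr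
    _ = _ := by ring

lemma nthPrime_div_le {j k : ℕ} (hj : 1000 ≤ j) (hjk : j ≤ k) :
    (nthPrime j : ℝ) / nthPrime k ≤ 8 * ((j : ℝ) / k) := by
  have hp := nthPrime_pos j
  have hpq : (nthPrime j : ℝ) ≤ nthPrime k := by exact_mod_cast nthPrime_monotone hjk
  have hk0 : (0 : ℝ) < k := Nat.cast_pos.2 (by omega)
  rw [div_le_iff₀ (hp.trans_le hpq)]
  calc (nthPrime j : ℝ) ≤ 2 * j * Real.log (nthPrime j) := nthPrime_le_mul_log hj
    _ ≤ 2 * j * Real.log (nthPrime k) := by gcongr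
    _ = 2 * (j / k) * (k * Real.log (nthPrime k)) := by field_simp
    _ ≤ 2 * (j / k) * (4 * nthPrime k) := by
        gcongr ?_ * ?_
        exact mul_log_nthPrime_le ((by omega : 1 ≤ j).trans hjk)
    _ = _ := by ring

lemma rpow_neg_eq_div_rpow_mul {x y : ℝ} (hx : 0 < x) (hy : 0 < y) (u : ℝ) :
    x ^ (-u) = (y / x) ^ u * y ^ (-u) := by
  have := Real.rpow_pos_of_pos hy u
  rw [Real.div_rpow hy.le hx.le, Real.rpow_neg hx.le, Real.rpow_neg hy.le]
  field_simp

lemma nthPrime_rpow_neg_antitone {u : ℝ} (hu : 0 ≤ u) :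
    Antitone fun n => (nthPrime n : ℝ) ^ (-u) := fun _ _ h =>
  Real.rpow_le_rpow_of_nonpos (nthPrime_pos _) (by exact_mod_cast nthPrime_monotone h)
    (neg_nonpos.2 hu)

lemma summable_nthPrime_rpow_neg {u : ℝ} (hu : 1 < u) :
    Summable fun n => (nthPrime n : ℝ) ^ (-u) := by
  refine (summable_nat_add_iff 1).1 (Summable.of_nonneg_of_le
    (fun n => Real.rpow_nonneg (nthPrime_pos _).le _) (fun n => ?_)
    ((summable_nat_add_iff 1).2 (Real.summable_nat_rpow.2 (neg_lt_neg hu))))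
  exact Real.rpow_le_rpow_of_nonpos (by positivity) (by exact_mod_cast (lt_nthPrime (n + 1)).le)
    (by linarith)

lemma nthPrime_rpow_neg_le {γ : ℝ} (hγ : 0 < γ) (hγ₁ : γ ≤ 1) {j k : ℕ} (hj : 1000 ≤ j)
    (hjk : j ≤ k) (hlog : 2 / γ ≤ Real.log (nthPrime j)) :
    (nthPrime j : ℝ) ^ (-(1 - γ)) ≤
      8 * ((k : ℝ) / j) ^ (1 - γ / 2) * (nthPrime k : ℝ) ^ (-(1 - γ)) := by
  rw [rpow_neg_eq_div_rpow_mul (nthPrime_pos j) (nthPrime_pos k)]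
  have hR : 1 ≤ (nthPrime k : ℝ) / nthPrime j :=
    (one_le_div (nthPrime_pos j)).2 (by exact_mod_cast nthPrime_monotone hjk)
  have := Real.rpow_nonneg (nthPrime_pos k).le (-(1 - γ))
  gcongr
  calc ((nthPrime k : ℝ) / nthPrime j) ^ (1 - γ)
      ≤ ((nthPrime k : ℝ) / nthPrime j) ^ ((1 - γ / 2) * (1 - γ / 2)) :=
        Real.rpow_le_rpow_of_exponent_le hR (by linarith [sq_nonneg γ])
    _ = (((nthPrime k : ℝ) / nthPrime j) ^ (1 - γ / 2)) ^ (1 - γ / 2) :=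
        Real.rpow_mul (by linarith) _ _
    _ ≤ (8 * ((k : ℝ) / j)) ^ (1 - γ / 2) := by
        refine Real.rpow_le_rpow (Real.rpow_nonneg (by linarith) _) ?_ (by linarith)
        exact nthPrime_div_rpow_le hj hjk (half_pos hγ) (by rwa [one_div_div])
    _ = (8 : ℝ) ^ (1 - γ / 2) * ((k : ℝ) / j) ^ (1 - γ / 2) :=
        Real.mul_rpow (by norm_num) (by positivity)
    _ ≤ 8 * ((k : ℝ) / j) ^ (1 - γ / 2) := by
        gcongr
        exact Real.rpow_le_self_of_one_le (by norm_num) (by linarith)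

lemma sum_Ico_nthPrime_rpow_neg_le {u : ℝ} (hu : 1 < u) (hu₂ : u ≤ 2) {n : ℕ} (hn : 1000 ≤ n)
    (k : ℕ) : ∑ j ∈ Finset.Ico n k, (nthPrime j : ℝ) ^ (-u) ≤
      64 * (2 / (u - 1)) * n * (nthPrime n : ℝ) ^ (-u) := by
  have hn0 : (0 : ℝ) < n := Nat.cast_pos.2 (by omega)
  have := Real.rpow_nonneg (nthPrime_pos n).le (-u)
  have h8 : (8 : ℝ) ^ u ≤ 64 := by
    refine (Real.rpow_le_rpow_of_exponent_le (by norm_num) hu₂).trans ?_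
    norm_num
  have hterm : ∀ j ∈ Finset.Ico n k, (nthPrime j : ℝ) ^ (-u) ≤
      64 * (n : ℝ) ^ u * (nthPrime n : ℝ) ^ (-u) * (j : ℝ) ^ (-u) := by
    intro j hj
    rw [rpow_neg_eq_div_rpow_mul (nthPrime_pos j) (nthPrime_pos n)]
    calc ((nthPrime n : ℝ) / nthPrime j) ^ u * (nthPrime n : ℝ) ^ (-u)
        ≤ (8 * ((n : ℝ) / j)) ^ u * (nthPrime n : ℝ) ^ (-u) := by
          gcongr
          exact nthPrime_div_le hn (Finset.mem_Ico.1 hj).1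
      _ = 8 ^ u * (n : ℝ) ^ u * (nthPrime n : ℝ) ^ (-u) * (j : ℝ) ^ (-u) := by
          rw [Real.mul_rpow (by norm_num) (by positivity), Real.div_rpow hn0.le j.cast_nonneg,
            Real.rpow_neg j.cast_nonneg]
          ring
      _ ≤ _ := by gcongr
  calc ∑ j ∈ Finset.Ico n k, (nthPrime j : ℝ) ^ (-u)
      ≤ ∑ j ∈ Finset.Ico n k, 64 * (n : ℝ) ^ u * (nthPrime n : ℝ) ^ (-u) * (j : ℝ) ^ (-u) :=
        Finset.sum_le_sum hterm
    _ ≤ 64 * (n : ℝ) ^ u * (nthPrime n : ℝ) ^ (-u) * (2 / (u - 1) * (n : ℝ) ^ (1 - u)) := by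
        rw [← Finset.mul_sum]
        gcongr
        exact sum_Ico_rpow_neg_le hu hu₂ (by omega) k
    _ = 64 * (2 / (u - 1)) * ((n : ℝ) ^ u * (n : ℝ) ^ (1 - u)) * (nthPrime n : ℝ) ^ (-u) := by
        ring
    _ = 64 * (2 / (u - 1)) * n * (nthPrime n : ℝ) ^ (-u) := by
        rw [← Real.rpow_add hn0, add_sub_cancel, Real.rpow_one]

lemma thousand_le_of_exp_le {δ : ℝ} (hδ : 0 < δ) (hδ₁ : δ ≤ 1 / 2) {n : ℕ}
    (hn : Real.exp (16 / δ ^ 4) ≤ n) : 1000 ≤ n := by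
  have h256 : 256 ≤ 16 / δ ^ 4 := by
    rw [le_div_iff₀ (by positivity)]
    linarith [pow_le_pow_left₀ hδ.le hδ₁ 4]
  have hexp := Real.quadratic_le_exp_of_nonneg (show (0 : ℝ) ≤ 256 by norm_num)
  have hreal : (1000 : ℝ) ≤ n := by linarith [Real.exp_le_exp.2 h256]
  exact_mod_cast hreal

lemma moderateDecay_nthPrime_rpow_neg {t : ℝ} (ht₁ : 1 / 2 ≤ t) (ht₂ : t < 1) {n : ℕ}
    (hn : Real.exp (16 / (1 - t) ^ 4) ≤ n) :
    ModerateDecay (1 - t) (fun k => (nthPrime k : ℝ) ^ (-t)) n := by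
  obtain ⟨δ, rfl⟩ : ∃ δ, t = 1 - δ := ⟨1 - t, (sub_sub_cancel 1 t).symm⟩
  rw [sub_sub_cancel] at hn ⊢
  have hδ : 0 < δ := by linarith
  have hδ₁ : δ ≤ 1 / 2 := by linarith
  have hδ2 : δ ^ 2 ≤ 1 / 4 := by nlinarith
  refine ⟨hδ, hδ₁, fun k => Real.rpow_pos_of_pos (nthPrime_pos k) _,
    nthPrime_rpow_neg_antitone (by linarith), hn, fun j k hj hjk => ?_⟩
  have hlog : 2 / δ ^ 2 ≤ Real.log (nthPrime j) := by
    rw [Real.le_log_iff_exp_le (nthPrime_pos j)]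
    have hnj : (n : ℝ) ≤ nthPrime j := by exact_mod_cast hj.trans (lt_nthPrime j).le
    refine (Real.exp_le_exp.2 ?_).trans (hn.trans hnj)
    rw [div_le_div_iff₀ (by positivity) (by positivity)]
    nlinarith [pow_pos hδ 2]
  rw [← Real.rpow_mul (nthPrime_pos j).le, ← Real.rpow_mul (nthPrime_pos k).le,
    show -(1 - δ) * (1 + δ) = -(1 - δ ^ 2) by ring]
  exact nthPrime_rpow_neg_le (by positivity) (by linarith)
    ((thousand_le_of_exp_le hδ hδ₁ hn).trans hj) hjk hlog

end Primes

theorem perfect_packing_P_harmonic_general {t : ℝ} (ht₁ : 1 / 2 < t) (ht₂ : t < 1) {n₀ : ℕ}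
    (hn₀ : Real.exp (16 / (1 - t) ^ 4) ≤ n₀)
    (hn₀' : Real.exp (1 / ((2 * t - 1) * (1 - t))) ≤ n₀) :
    ∃ (c : ℝ × ℝ) (pos : {n : ℕ // n₀ ≤ n} → ℝ × ℝ),
      PerfectlyPacked
        (fun n : {n : ℕ // n₀ ≤ n} => square (pos n) ((nthPrime (n : ℕ) : ℝ) ^ (-t)))
        (square c
          (Real.sqrt (∑' n : {n : ℕ // n₀ ≤ n}, (nthPrime (n : ℕ) : ℝ) ^ (-(2 * t))))) := by
  have hdecay := moderateDecay_nthPrime_rpow_neg ht₁.le ht₂ hn₀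
  have hn := thousand_le_of_exp_le hdecay.δ_pos hdecay.δ_le_half hn₀
  have hsq : ∀ k, ((nthPrime k : ℝ) ^ (-t)) ^ 2 = (nthPrime k : ℝ) ^ (-(2 * t)) := fun k => by
    rw [← Real.rpow_mul_natCast (nthPrime_pos k).le, Nat.cast_ofNat, neg_mul, mul_comm]
  have hlog : 2 / (2 * t - 1) ≤ Real.log n₀ := by
    rw [Real.le_log_iff_exp_le (hdecay.cast_pos le_rfl)]
    refine (Real.exp_le_exp.2 ?_).trans hn₀'
    rw [div_le_div_iff₀ (by linarith) (mul_pos (by linarith) (by linarith))]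
    nlinarith
  have hsum : Summable fun k : {k // n₀ ≤ k} => (nthPrime k : ℝ) ^ (-(2 * t)) :=
    (summable_nthPrime_rpow_neg (by linarith)).subtype _
  have htail : ∀ k, ∑ j ∈ Finset.Ico n₀ k, (nthPrime j : ℝ) ^ (-(2 * t)) ≤
      64 * (n₀ * Real.log n₀) * (nthPrime n₀ : ℝ) ^ (-(2 * t)) := fun k => by
    refine (sum_Ico_nthPrime_rpow_neg_le (by linarith) (by linarith) hn k).trans ?_
    rw [mul_comm (n₀ : ℝ), ← mul_assoc]
    have := Real.rpow_nonneg (nthPrime_pos n₀).le (-(2 * t))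
    gcongr
  simp only [← hsq] at hsum htail ⊢
  exact hdecay.exists_perfectlyPacked hsum htail

theorem perfect_packing_P_harmonic
    (θ : ℝ) (hθ₁ : 0 < θ) (hθ₂ : θ < 1) (Nθ : ℕ) (hNθ : 0 < Nθ)
    (hgap : ∀ n : ℕ, Nθ ≤ n →
      (nthPrime (n + 1) : ℝ) - (nthPrime n : ℝ) ≤ (nthPrime n : ℝ) ^ θ)
    (t : ℝ) (ht₁ : 1 / 2 < t) (ht₂ : t < 1)
    (M N₀ : ℕ) (hM : 0 < M) (hN₀ : 0 < N₀)
    (hMbig : (M : ℝ) ≥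
      max ((4 : ℝ) ^ ((1 : ℝ) / (1 - t)) *
          (20 * (2 : ℝ) ^ (6 * t - t ^ 2) * (2 * t - 1) /
            (3 * (1 - t) ^ 2 * (1 - (2 : ℝ) ^ (1 - 2 * t)))) ^ (2 / (t * (1 - t))))
        ((50 * ((6 : ℝ) / 5) ^ (t * (2 - t))) ^ (2 / (1 - t))))
    (hN₀1 : Nθ ≤ N₀)
    (hN₀2 : (N₀ : ℝ) ≥ 85536 * (M : ℝ) ^ 5)
    (hN₀3 : (N₀ : ℝ) ≥ 3 * 10 ^ 18)
    (hN₀4 : (N₀ : ℝ) ≥ 2 * Real.exp (16 / (1 - t) ^ 4))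
    (hN₀5 : (N₀ : ℝ) ≥ 1 / (1 - (2 : ℝ) ^ (-(1 / (2 * t - 1)))))
    (hN₀6 : (N₀ : ℝ) ≥ (M : ℝ) ^ ((1 : ℝ) / (1 - t) ^ 2))
    (hN₀7 : (N₀ : ℝ) ≥ (40 / 7 * (1 - t) ^ 2) ^ (2 / t) *
      ((2 : ℝ) ^ (1 + 2 * t) / (2 * t - 1)) ^ ((2 - t) / t) * (M : ℝ) ^ ((1 + t) / t))
    (hN₀8 : (N₀ : ℝ) ≥ Real.exp (1 / ((2 * t - 1) * (1 - t)))) :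
    ∀ n₀ : ℕ, N₀ ≤ n₀ →
      ∃ (c : ℝ × ℝ) (pos : {n : ℕ // n₀ ≤ n} → ℝ × ℝ),
        PerfectlyPacked
          (fun n : {n : ℕ // n₀ ≤ n} => square (pos n) ((nthPrime (n : ℕ) : ℝ) ^ (-t)))
          (square c
            (Real.sqrt (∑' n : {n : ℕ // n₀ ≤ n}, (nthPrime (n : ℕ) : ℝ) ^ (-(2 * t))))) := by
  intro n₀ hn₀
  have hN : (N₀ : ℝ) ≤ n₀ := by exact_mod_cast hn₀
  exact perfect_packing_P_harmonic_general ht₁ ht₂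
    (by linarith [Real.exp_pos (16 / (1 - t) ^ 4)]) (by linarith)
end

section
/- Let κ : ℝ_{>1} → ℝ_{>1} be a smooth function such that f(x) := x·κ(x) is a smooth increasing function. Suppose that: (a) for every ε > 0 there exists a positive integer N_ε such that for every integer n ≥ N_ε one has max_{x∈[n,2n]} κ'(x) ≤ ε·κ(n), (1−ε)·inf_{x∈(1,2n]} κ(x) ≤ κ(n) ≤ n^ε, and c_𝔪·κ(n) ≤ inf_{x≥n} κ(x) ≤ C_𝔪·κ(n), where C_𝔪 > c_𝔪 > 0 are fixed positive constants; (b) there exist constants 0 < α < 1 and C_α > 1 such that κ(n) ≤ C_α·inf_{x ≥ n^α} κ(x) for all integers n ≥ N_ε. Then for any 1/2 < t < 1 there exists a positive integer N₀ = N₀(t) such that for every integer n₀ ≥ N₀, the squares of sidelength (n·κ(n))^{-t} for n ≥ n₀ can be packed perfectly into a square of area ∑_{n=n₀}^{∞} (n·κ(n))^{-2t}. -/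
open Set MeasureTheory

/-!
The squares are placed greedily, in order of decreasing side, in rows along the bottoms of boxes
that are still free. To see that the algorithm never gets stuck, give a box of size `w × h` the
weight `w ^ δ * h + w * h ^ δ` with a small `δ > 0`. A box whose shorter side is at most `b` has
area at most `b ^ (1 - δ)` times its weight, so as long as the total weight of the free boxes is
small compared to their total area, one of them is large in both directions and has room for a long
row.

A row starting with the `n`-th square, of side `s n`, and ending before the `(n + L)`-th one adds
weight of order `(s n) ^ (1 + δ)` at its ends, and at most
`L * s n * (s n - s (n + L)) ^ δ` in the slivers above its squares. By a Young-type inequality the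
latter is at most `ε * L * (s n) ^ (1 + δ)` plus a multiple of
`L * ((s n) ^ (1 + δ) - (s (n + L)) ^ (1 + δ))`; as `L` is small compared to `n`, this drop is
absorbed by the telescoping potential `n * (s n) ^ (1 + δ)`. Hence the weight up to stage `n` is at
most a small multiple of `∑ m < n, (s m) ^ (1 + δ)`, which is of order `n * (s n) ^ (1 + δ)` when
`s` decays slower than `1 / n`, whereas the free area is at least of order `n * (s n) ^ 2`.

Of the function `κ`, this uses only that `κ n` is eventually smaller than every positive power of
`n` and that it is almost increasing: together they make `n * κ n` grow like `n` up to
arbitrarily small powers.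
-/

open Filter

/-! ### Half-open boxes -/

/-- The half-open axis-parallel rectangle `[x, x + w) × [y, y + h)`. Being half-open, boxes can be
cut into boxes exactly, so that packings become identities between indicator functions. -/
structure Box where
  x : ℝ
  y : ℝ
  w : ℝ
  h : ℝ

namespace Box

/-- The set of points of a box. -/
def toSet (R : Box) : Set (ℝ × ℝ) :=
  Ico R.x (R.x + R.w) ×ˢ Ico R.y (R.y + R.h)

/-- The indicator function of a box, with the point as first argument. -/
noncomputable def ind (z : ℝ × ℝ) (R : Box) : ℝ := R.toSet.indicator 1 z

/-- The area of a box. -/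
def area (R : Box) : ℝ := R.w * R.h

/-- A perimeter-like size of a box. For `δ = 1` it is twice the area and for `δ = 0` half the
perimeter; for `0 < δ < 1` long thin boxes have small weight, but large weight compared to their
area. -/
noncomputable def weight (δ : ℝ) (R : Box) : ℝ := R.w ^ δ * R.h + R.w * R.h ^ δ

/-- The half-open version of `square p a`. -/
def ofSide (p : ℝ × ℝ) (a : ℝ) : Box := ⟨p.1, p.2, a, a⟩

lemma ind_of_mem {z : ℝ × ℝ} {R : Box} (hz : z ∈ R.toSet) : ind z R = 1 :=
  indicator_of_mem hz _

lemma ind_of_notMem {z : ℝ × ℝ} {R : Box} (hz : z ∉ R.toSet) : ind z R = 0 :=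
  indicator_of_notMem hz _

lemma ind_nonneg (z : ℝ × ℝ) (R : Box) : 0 ≤ ind z R :=
  indicator_nonneg (fun _ _ => zero_le_one) z

lemma ind_le_one (z : ℝ × ℝ) (R : Box) : ind z R ≤ 1 :=
  indicator_le' (fun _ _ => le_rfl) (fun _ _ => zero_le_one) z

lemma ind_cut_width (z : ℝ × ℝ) (R : Box) {a : ℝ} (ha : 0 ≤ a) (haw : a ≤ R.w) :
    ind z R = ind z ⟨R.x, R.y, a, R.h⟩ + ind z ⟨R.x + a, R.y, R.w - a, R.h⟩ := by
  have hdisj : Disjoint (toSet ⟨R.x, R.y, a, R.h⟩) (toSet ⟨R.x + a, R.y, R.w - a, R.h⟩) :=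
    (Ico_disjoint_Ico_same).set_prod_left _ _
  have hunion : R.toSet = toSet ⟨R.x, R.y, a, R.h⟩ ∪ toSet ⟨R.x + a, R.y, R.w - a, R.h⟩ := by
    simp only [toSet, ← union_prod]
    rw [Ico_union_Ico_eq_Ico (by linarith) (by linarith), add_add_sub_cancel]
  simp only [ind]
  rw [hunion, indicator_union_of_disjoint hdisj]

lemma ind_cut_height (z : ℝ × ℝ) (R : Box) {a : ℝ} (ha : 0 ≤ a) (hah : a ≤ R.h) :
    ind z R = ind z ⟨R.x, R.y, R.w, a⟩ + ind z ⟨R.x, R.y + a, R.w, R.h - a⟩ := by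
  have hdisj : Disjoint (toSet ⟨R.x, R.y, R.w, a⟩) (toSet ⟨R.x, R.y + a, R.w, R.h - a⟩) :=
    (Ico_disjoint_Ico_same).set_prod_right _ _
  have hunion : R.toSet = toSet ⟨R.x, R.y, R.w, a⟩ ∪ toSet ⟨R.x, R.y + a, R.w, R.h - a⟩ := by
    simp only [toSet, ← prod_union]
    rw [Ico_union_Ico_eq_Ico (by linarith) (by linarith), add_add_sub_cancel]
  simp only [ind]
  rw [hunion, indicator_union_of_disjoint hdisj]

lemma measurableSet_toSet (R : Box) : MeasurableSet R.toSet :=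
  measurableSet_Ico.prod measurableSet_Ico

lemma volume_toSet_ofSide (p : ℝ × ℝ) {a : ℝ} (ha : 0 ≤ a) :
    volume (ofSide p a).toSet = ENNReal.ofReal (a ^ 2) := by
  simp [toSet, ofSide, Measure.volume_eq_prod, Real.volume_Ico, ← ENNReal.ofReal_mul ha, sq]

lemma toSet_ofSide_subset_square (p : ℝ × ℝ) (a : ℝ) : (ofSide p a).toSet ⊆ square p a :=
  prod_mono Ico_subset_Icc_self Ico_subset_Icc_self

lemma interior_square_subset_toSet_ofSide (p : ℝ × ℝ) (a : ℝ) :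
    interior (square p a) ⊆ (ofSide p a).toSet := by
  rw [square, interior_prod_eq, interior_Icc, interior_Icc]
  exact prod_mono Ioo_subset_Ico_self Ioo_subset_Ico_self

lemma closure_toSet_ofSide (p : ℝ × ℝ) {a : ℝ} (ha : a ≠ 0) :
    closure (ofSide p a).toSet = square p a := by
  simp [toSet, ofSide, square, closure_prod_eq, closure_Ico, ha]

end Box

lemma volume_square_s13 (p : ℝ × ℝ) {a : ℝ} (ha : 0 ≤ a) :
    volume (square p a) = ENNReal.ofReal (a ^ 2) := by
  rw [square, Measure.volume_eq_prod, Measure.prod_prod]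
  simp [Real.volume_Icc, ← ENNReal.ofReal_mul ha, sq]

lemma PerfectlyPacked.comp_equiv {ι ι' : Type*} {S : ι → Set (ℝ × ℝ)} {Ω : Set (ℝ × ℝ)}
    (h : PerfectlyPacked S Ω) (e : ι' ≃ ι) : PerfectlyPacked (S ∘ e) Ω := by
  refine ⟨fun i => h.1 (e i), fun i j hij => h.2.1 (e.injective.ne hij), ?_⟩
  rw [← h.2.2, ← e.surjective.iUnion_comp S]
  rfl

lemma perfectlyPacked_of_pairwise_disjoint {ι : Type*} [Countable ι] {pos : ι → ℝ × ℝ} {u : ι → ℝ}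
    {c : ℝ × ℝ} {W : ℝ} (hu : ∀ i, 0 < u i) (hW : 0 < W)
    (hsub : ∀ i, (Box.ofSide (pos i) (u i)).toSet ⊆ (Box.ofSide c W).toSet)
    (hdisj : Pairwise fun i j =>
      Disjoint (Box.ofSide (pos i) (u i)).toSet (Box.ofSide (pos j) (u j)).toSet)
    (hsum : HasSum (fun i => u i ^ 2) (W ^ 2)) :
    PerfectlyPacked (fun i => square (pos i) (u i)) (square c W) := by
  set B : ι → Set (ℝ × ℝ) := fun i => (Box.ofSide (pos i) (u i)).toSet
  have hB : ∀ i, MeasurableSet (B i) := fun i => Box.measurableSet_toSet _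
  have hvolume : volume (⋃ i, B i) = volume (square c W) := by
    rw [measure_iUnion hdisj hB, volume_square_s13 c hW.le, ← hsum.tsum_eq,
      ENNReal.ofReal_tsum_of_nonneg (fun _ => sq_nonneg _) hsum.summable]
    exact tsum_congr fun i => Box.volume_toSet_ofSide _ (hu i).le
  have hunion : ⋃ i, B i ⊆ square c W :=
    iUnion_subset fun i => (hsub i).trans (Box.toSet_ofSide_subset_square c W)
  have hfinite : volume (⋃ i, B i) ≠ ⊤ := by
    rw [hvolume, volume_square_s13 c hW.le]
    exact ENNReal.ofReal_ne_top
  have hnull : volume (square c W \ ⋃ i, B i) = 0 := by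
    rw [measure_sdiff hunion (MeasurableSet.iUnion hB).nullMeasurableSet hfinite, hvolume,
      tsub_self]
  refine ⟨fun i => ?_, fun i j hij => ?_, measure_mono_null (sdiff_subset_sdiff_right ?_) hnull⟩
  · change square (pos i) (u i) ⊆ square c W
    rw [← Box.closure_toSet_ofSide _ (hu i).ne', ← Box.closure_toSet_ofSide _ hW.ne']
    exact closure_mono (hsub i)
  · exact (hdisj hij).mono (Box.interior_square_subset_toSet_ofSide _ _)
      (Box.interior_square_subset_toSet_ofSide _ _)
  · exact iUnion_mono fun i => Box.toSet_ofSide_subset_square _ _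

lemma perfectlyPacked_of_sum_ind_le {ι : Type*} [Countable ι] {pos : ι → ℝ × ℝ} {u : ι → ℝ}
    {c : ℝ × ℝ} {W : ℝ} (hu : ∀ i, 0 < u i) (hW : 0 < W)
    (hind : ∀ (z : ℝ × ℝ) (F : Finset ι),
      ∑ i ∈ F, Box.ind z (Box.ofSide (pos i) (u i)) ≤ Box.ind z (Box.ofSide c W))
    (hsum : HasSum (fun i => u i ^ 2) (W ^ 2)) :
    PerfectlyPacked (fun i => square (pos i) (u i)) (square c W) := by
  classical
  refine perfectlyPacked_of_pairwise_disjoint hu hW (fun i z hz => ?_) (fun i j hij => ?_) hsum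
  · by_contra hzW
    have h := hind z {i}
    rw [Finset.sum_singleton, Box.ind_of_mem hz, Box.ind_of_notMem hzW] at h
    linarith
  · refine Set.disjoint_left.2 fun z hzi hzj => ?_
    have h := hind z {i, j}
    rw [Finset.sum_pair hij, Box.ind_of_mem hzi, Box.ind_of_mem hzj] at h
    linarith [Box.ind_le_one z (Box.ofSide c W)]

/-! ### Greedy rows -/

lemma rpow_one_sub_mul_rpow {x δ : ℝ} (hx : 0 ≤ x) (hδ : 0 ≤ δ) (hδ1 : δ ≤ 1) :
    x ^ (1 - δ) * x ^ δ = x := by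
  rw [← Real.rpow_add_of_nonneg hx (sub_nonneg.2 hδ1) hδ, sub_add_cancel, Real.rpow_one]

namespace Box

lemma weight_mono {δ : ℝ} (hδ : 0 ≤ δ) {R R' : Box} (hw : 0 ≤ R.w) (hh : 0 ≤ R.h)
    (hww : R.w ≤ R'.w) (hhh : R.h ≤ R'.h) : R.weight δ ≤ R'.weight δ := by
  have := hw.trans hww
  unfold weight
  gcongr

lemma weight_ofSide {δ : ℝ} (p : ℝ × ℝ) {a : ℝ} (ha : 0 < a) :
    weight δ (ofSide p a) = 2 * a ^ (1 + δ) := by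
  simp only [weight, ofSide]
  rw [Real.rpow_add ha, Real.rpow_one]
  ring

lemma weight_le_two_mul_rpow {δ H : ℝ} (hδ : 0 ≤ δ) (hδ1 : δ ≤ 1) {R : Box} (hw : 0 ≤ R.w)
    (hh : 0 ≤ R.h) (hwH : R.w ≤ H) (hhH : R.h ≤ H) : R.weight δ ≤ 2 * H * R.h ^ δ := by
  have : 0 ≤ 1 - δ := sub_nonneg.2 hδ1
  have hH : 0 ≤ H := hw.trans hwH
  have hlong : R.w ^ δ * R.h ≤ H * R.h ^ δ := calc
    R.w ^ δ * R.h = R.w ^ δ * (R.h ^ (1 - δ) * R.h ^ δ) := by rw [rpow_one_sub_mul_rpow hh hδ hδ1]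
    _ ≤ H ^ δ * (H ^ (1 - δ) * R.h ^ δ) := by gcongr
    _ = H * R.h ^ δ := by rw [← mul_assoc, mul_comm (H ^ δ), rpow_one_sub_mul_rpow hH hδ hδ1]
  have hshort : R.w * R.h ^ δ ≤ H * R.h ^ δ := by gcongr
  rw [weight]
  linarith

lemma area_le_rpow_mul_weight {δ b : ℝ} (hδ : 0 ≤ δ) (hδ1 : δ ≤ 1) {R : Box} (hw : 0 ≤ R.w)
    (hh : 0 ≤ R.h) (hb : R.w ≤ b ∨ R.h ≤ b) : R.area ≤ b ^ (1 - δ) * R.weight δ := by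
  have key : ∀ u v : ℝ, 0 ≤ u → 0 ≤ v → u ≤ b →
      u * v ≤ b ^ (1 - δ) * (u ^ δ * v + u * v ^ δ) := by
    intro u v hu hv hub
    have hb0 : 0 ≤ b := hu.trans hub
    have : 0 ≤ 1 - δ := sub_nonneg.2 hδ1
    calc u * v = u ^ (1 - δ) * (u ^ δ * v) := by
          rw [← mul_assoc, rpow_one_sub_mul_rpow hu hδ hδ1]
      _ ≤ b ^ (1 - δ) * (u ^ δ * v + u * v ^ δ) := by
          gcongr
          exact le_add_of_nonneg_right (by positivity)
  rcases hb with h | h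
  · exact key _ _ hw hh h
  · refine (mul_comm _ _).trans_le ((key _ _ hh hw h).trans_eq ?_)
    rw [weight]
    ring

/-- If all boxes were thin, their total area would be controlled by their total weight. -/
lemma exists_lt_of_rpow_mul_weight_lt_area {δ b : ℝ} (hδ : 0 ≤ δ) (hδ1 : δ ≤ 1) {S : Multiset Box}
    (hS : ∀ R ∈ S, 0 ≤ R.w ∧ 0 ≤ R.h)
    (h : b ^ (1 - δ) * (S.map (weight δ)).sum < (S.map area).sum) :
    ∃ R ∈ S, b < R.w ∧ b < R.h := by
  by_contra! hthin
  refine h.not_ge ?_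
  rw [← Multiset.sum_map_mul_left]
  refine Multiset.sum_map_le_sum_map _ _ fun R hR => ?_
  refine area_le_rpow_mul_weight hδ hδ1 (hS R hR).1 (hS R hR).2 ?_
  exact (le_or_gt R.w b).imp_right (hthin R hR)

section Row

variable (u : ℕ → ℝ) (R : Box) (L : ℕ)

/-- The lower-left corner of the `i`-th square when squares of sides `u 0, u 1, …` are lined up
along the bottom of `R`, from left to right. -/
def rowCorner (i : ℕ) : ℝ × ℝ := (R.x + ∑ j ∈ Finset.range i, u j, R.y)

/-- The part of `R` above the horizontal strip of height `u 0` that contains the row. -/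
def rowTop : Box := ⟨R.x, R.y + u 0, R.w, R.h - u 0⟩

/-- The part of the strip of height `u 0` to the right of the first `L` squares. -/
def rowEnd : Box := ⟨R.x + ∑ j ∈ Finset.range L, u j, R.y, R.w - ∑ j ∈ Finset.range L, u j, u 0⟩

/-- The part of the strip of height `u 0` above the `i`-th square. -/
def rowSliver (i : ℕ) : Box := ⟨R.x + ∑ j ∈ Finset.range i, u j, R.y + u i, u i, u 0 - u i⟩

/-- The boxes that remain of `R` when `L` squares have been lined up along its bottom. -/
def rowRest : Multiset Box :=
  R.rowTop u ::ₘ R.rowEnd u L ::ₘ (Multiset.range L).map (R.rowSliver u)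

lemma sum_map_rowRest (φ : Box → ℝ) :
    ((R.rowRest u L).map φ).sum =
      φ (R.rowTop u) + (φ (R.rowEnd u L) + ∑ i ∈ Finset.range L, φ (R.rowSliver u i)) := by
  rw [rowRest, Multiset.map_cons, Multiset.map_cons, Multiset.sum_cons, Multiset.sum_cons,
    Multiset.map_map]
  rfl

lemma forall_mem_rowRest {P : Box → Prop} (htop : P (R.rowTop u)) (hend : P (R.rowEnd u L))
    (hsliver : ∀ i, P (R.rowSliver u i)) : ∀ Q ∈ R.rowRest u L, P Q := by
  simp only [rowRest, Multiset.forall_mem_cons, Multiset.mem_map]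
  exact ⟨htop, hend, by rintro _ ⟨i, -, rfl⟩; exact hsliver i⟩

lemma area_rowRest :
    ((R.rowRest u L).map area).sum = R.area - ∑ i ∈ Finset.range L, u i ^ 2 := by
  have hslivers : ∑ i ∈ Finset.range L, (R.rowSliver u i).area =
      (∑ i ∈ Finset.range L, u i) * u 0 - ∑ i ∈ Finset.range L, u i ^ 2 := by
    rw [Finset.sum_mul, ← Finset.sum_sub_distrib]
    exact Finset.sum_congr rfl fun i _ => by simp only [area, rowSliver]; ring
  rw [sum_map_rowRest, hslivers]
  simp only [area, rowTop, rowEnd]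
  ring

variable {u R L}

lemma ind_rowStrip (z : ℝ × ℝ) (hu0 : ∀ i, 0 ≤ u i) (hu : Antitone u)
    (hL : ∑ i ∈ Finset.range L, u i ≤ R.w) :
    ind z ⟨R.x, R.y, R.w, u 0⟩ = ∑ i ∈ Finset.range L, ind z (ofSide (R.rowCorner u i) (u i)) +
      (ind z (R.rowEnd u L) + ∑ i ∈ Finset.range L, ind z (R.rowSliver u i)) := by
  induction L with
  | zero => simp [rowEnd]
  | succ L ih =>
    rw [Finset.sum_range_succ] at hL
    have hcut : ind z (R.rowEnd u L) = ind z (ofSide (R.rowCorner u L) (u L)) +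
        ind z (R.rowSliver u L) + ind z (R.rowEnd u (L + 1)) := by
      rw [ind_cut_width z _ (hu0 L) (by simp only [rowEnd]; linarith),
        ind_cut_height z _ (hu0 L) (by exact hu (Nat.zero_le L))]
      simp only [rowEnd, rowSliver, rowCorner, ofSide, Finset.sum_range_succ, add_assoc, sub_sub]
    rw [ih (by linarith [hu0 L]), hcut, Finset.sum_range_succ, Finset.sum_range_succ]
    ring

lemma ind_eq_sum_add_rowRest (z : ℝ × ℝ) (hu0 : ∀ i, 0 ≤ u i) (hu : Antitone u)
    (hL : ∑ i ∈ Finset.range L, u i ≤ R.w) (hh : u 0 ≤ R.h) :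
    ind z R = ∑ i ∈ Finset.range L, ind z (ofSide (R.rowCorner u i) (u i)) +
      ((R.rowRest u L).map (ind z)).sum := by
  rw [ind_cut_height z R (hu0 0) hh, ind_rowStrip z hu0 hu hL, sum_map_rowRest, rowTop]
  ring

lemma weight_rowRest_le {δ : ℝ} (hδ : 0 ≤ δ) (hδ1 : δ ≤ 1) (hu0 : ∀ i, 0 < u i) (hu : Antitone u)
    (hL : ∑ i ∈ Finset.range L, u i ≤ R.w) (hL' : R.w < ∑ i ∈ Finset.range (L + 1), u i)
    (hh : u 0 ≤ R.h) :
    ((R.rowRest u L).map (weight δ)).sum ≤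
      R.weight δ + 2 * u 0 ^ (1 + δ) + L * (2 * u 0 * (u 0 - u L) ^ δ) := by
  have hu_le : ∀ i, u i ≤ u 0 := fun i => hu (Nat.zero_le i)
  have hw : 0 ≤ R.w := (Finset.sum_nonneg fun i _ => (hu0 i).le).trans hL
  rw [Finset.sum_range_succ] at hL'
  have htop : (R.rowTop u).weight δ ≤ R.weight δ :=
    weight_mono hδ hw (sub_nonneg.2 hh) le_rfl (sub_le_self _ (hu0 0).le)
  have hend : (R.rowEnd u L).weight δ ≤ 2 * u 0 ^ (1 + δ) := by
    rw [← weight_ofSide (0, 0) (hu0 0)]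
    refine weight_mono hδ (sub_nonneg.2 hL) (hu0 0).le ?_ le_rfl
    simp only [rowEnd, ofSide]
    linarith [hu_le L]
  have hsliver : ∀ i ∈ Finset.range L,
      (R.rowSliver u i).weight δ ≤ 2 * u 0 * (u 0 - u L) ^ δ := by
    intro i hi
    have hLi : u L ≤ u i := hu (Finset.mem_range.1 hi).le
    have hdefect : 0 ≤ u 0 - u i := sub_nonneg.2 (hu_le i)
    refine (weight_le_two_mul_rpow hδ hδ1 (hu0 i).le hdefect (hu_le i)
      (sub_le_self _ (hu0 i).le)).trans ?_
    have := (hu0 0).le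
    simp only [rowSliver]
    gcongr
  have hslivers := Finset.sum_le_card_nsmul _ _ _ hsliver
  rw [Finset.card_range, nsmul_eq_mul] at hslivers
  rw [sum_map_rowRest]
  linarith

end Row

end Box

/-- The squares of sides `u 0, …, u (n - 1)` have been placed at `p 0, …, p (n - 1)` inside the
square `[0, W)²`, and the part of `[0, W)²` not yet covered is cut into the boxes of `S`. -/
structure IsPartialPacking (u : ℕ → ℝ) (W : ℝ) (n : ℕ) (p : ℕ → ℝ × ℝ) (S : Multiset Box) :
    Prop where
  w_mem : ∀ R ∈ S, R.w ∈ Icc 0 W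
  h_nonneg : ∀ R ∈ S, 0 ≤ R.h
  ind_eq : ∀ z, Box.ind z (Box.ofSide (0, 0) W) =
    ∑ m ∈ Finset.range n, Box.ind z (Box.ofSide (p m) (u m)) + (S.map (Box.ind z)).sum
  area_eq : (S.map Box.area).sum = W ^ 2 - ∑ m ∈ Finset.range n, u m ^ 2

namespace IsPartialPacking

variable {u : ℕ → ℝ} {W : ℝ} {n : ℕ} {p : ℕ → ℝ × ℝ} {S : Multiset Box}

lemma zero (hW : 0 ≤ W) (p : ℕ → ℝ × ℝ) :
    IsPartialPacking u W 0 p {Box.ofSide (0, 0) W} where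
  w_mem := by simp [Box.ofSide, hW]
  h_nonneg := by simp [Box.ofSide, hW]
  ind_eq := by simp
  area_eq := by simp [Box.area, Box.ofSide, sq]

lemma sum_ind_le (h : IsPartialPacking u W n p S) (z : ℝ × ℝ) :
    ∑ m ∈ Finset.range n, Box.ind z (Box.ofSide (p m) (u m)) ≤
      Box.ind z (Box.ofSide (0, 0) W) := by
  rw [h.ind_eq z]
  refine le_add_of_nonneg_right (Multiset.sum_nonneg fun v hv => ?_)
  obtain ⟨R, -, rfl⟩ := Multiset.mem_map.1 hv
  exact Box.ind_nonneg z R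

lemma append_row {R : Box} {L : ℕ} (h : IsPartialPacking u W n p (R ::ₘ S)) (hu0 : ∀ i, 0 ≤ u i)
    (hu : Antitone u) (hL : ∑ i ∈ Finset.range L, u (n + i) ≤ R.w) (hw : u n ≤ R.w)
    (hh : u n ≤ R.h) :
    IsPartialPacking u W (n + L)
      (fun m => if m < n then p m else R.rowCorner (fun i => u (n + i)) (m - n))
      (R.rowRest (fun i => u (n + i)) L + S) := by
  set v : ℕ → ℝ := fun i => u (n + i) with hv
  have hv0 : ∀ i, 0 ≤ v i := fun i => hu0 _
  have hv_anti : Antitone v := fun i j hij => hu (Nat.add_le_add_left hij n)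
  obtain ⟨hR, hSw⟩ := Multiset.forall_mem_cons.1 h.w_mem
  have hSh := (Multiset.forall_mem_cons.1 h.h_nonneg).2
  have hsum : 0 ≤ ∑ i ∈ Finset.range L, v i := Finset.sum_nonneg fun i _ => hv0 i
  have hv_le : ∀ i, v i ≤ u n := fun i => hu (Nat.le_add_right n i)
  constructor
  · refine fun Q hQ => (Multiset.mem_add.1 hQ).elim (fun hQ => ?_) (hSw Q)
    refine Box.forall_mem_rowRest v R L (P := fun Q => Q.w ∈ Icc 0 W) hR ?_ (fun i => ?_) Q hQ
    · exact ⟨sub_nonneg.2 hL, (sub_le_self _ hsum).trans hR.2⟩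
    · exact ⟨hv0 i, (hv_le i).trans (hw.trans hR.2)⟩
  · refine fun Q hQ => (Multiset.mem_add.1 hQ).elim (fun hQ => ?_) (hSh Q)
    exact Box.forall_mem_rowRest v R L (P := fun Q => 0 ≤ Q.h) (sub_nonneg.2 hh) (hv0 0)
      (fun i => sub_nonneg.2 (hv_le i)) Q hQ
  · intro z
    have hold : ∑ m ∈ Finset.range n, Box.ind z (Box.ofSide
        (if m < n then p m else R.rowCorner v (m - n)) (u m)) =
        ∑ m ∈ Finset.range n, Box.ind z (Box.ofSide (p m) (u m)) :=
      Finset.sum_congr rfl fun m hm => by rw [if_pos (Finset.mem_range.1 hm)]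
    rw [h.ind_eq z, Multiset.map_cons, Multiset.sum_cons,
      Box.ind_eq_sum_add_rowRest z hv0 hv_anti hL hh, Finset.sum_range_add, hold, Multiset.map_add,
      Multiset.sum_add]
    simp only [Nat.not_lt.2 (Nat.le_add_right n _), if_false, Nat.add_sub_cancel_left, hv]
    ring
  · have harea := h.area_eq
    rw [Multiset.map_cons, Multiset.sum_cons] at harea
    rw [Multiset.map_add, Multiset.sum_add, Box.area_rowRest, Finset.sum_range_add]
    linarith

lemma exists_large_box {δ b : ℝ} (h : IsPartialPacking u W n p S) (hδ : 0 ≤ δ) (hδ1 : δ ≤ 1)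
    (hb : b ^ (1 - δ) * (S.map (Box.weight δ)).sum < W ^ 2 - ∑ m ∈ Finset.range n, u m ^ 2) :
    ∃ R S', S = R ::ₘ S' ∧ b < R.w ∧ R.w ≤ W ∧ b < R.h := by
  rw [← h.area_eq] at hb
  obtain ⟨R, hRS, hRw, hRh⟩ := Box.exists_lt_of_rpow_mul_weight_lt_area hδ hδ1
    (fun R hR => ⟨(h.w_mem R hR).1, h.h_nonneg R hR⟩) hb
  obtain ⟨S', hS'⟩ := Multiset.exists_cons_of_mem hRS
  exact ⟨R, S', hS', hRw, (h.w_mem R hRS).2, hRh⟩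

end IsPartialPacking

lemma perfectlyPacked_of_forall_isPartialPacking {u : ℕ → ℝ} {W : ℝ} {pos : ℕ → ℝ × ℝ}
    (hu0 : ∀ n, 0 < u n) (hW : 0 < W) (hsum : HasSum (fun n => u n ^ 2) (W ^ 2))
    (h : ∀ k, ∃ n ≥ k, ∃ p, (∃ S, IsPartialPacking u W n p S) ∧ ∀ m < k, p m = pos m) :
    PerfectlyPacked (fun n => square (pos n) (u n)) (square (0, 0) W) := by
  refine perfectlyPacked_of_sum_ind_le hu0 hW (fun z F => ?_) hsum
  obtain ⟨k, hk⟩ : ∃ k, F ⊆ Finset.range k := F.exists_nat_subset_range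
  obtain ⟨n, hkn, p, ⟨S, hS⟩, hp⟩ := h k
  calc ∑ i ∈ F, Box.ind z (Box.ofSide (pos i) (u i))
      = ∑ i ∈ F, Box.ind z (Box.ofSide (p i) (u i)) :=
        Finset.sum_congr rfl fun i hi => by rw [hp i (Finset.mem_range.1 (hk hi))]
    _ ≤ ∑ i ∈ Finset.range n, Box.ind z (Box.ofSide (p i) (u i)) :=
        Finset.sum_le_sum_of_subset_of_nonneg (hk.trans (Finset.range_subset_range.2 hkn))
          fun i _ _ => Box.ind_nonneg z _
    _ ≤ Box.ind z (Box.ofSide (0, 0) W) := hS.sum_ind_le z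

lemma exists_forall_of_exists_prolongation {α : Type*} {P : ℕ → (ℕ → α) → Prop} {p₀ : ℕ → α}
    (h₀ : P 0 p₀)
    (hext : ∀ n p, P n p → ∃ n' p', n < n' ∧ P n' p' ∧ ∀ m < n, p' m = p m) :
    ∃ p : ℕ → α, ∀ k, ∃ n ≥ k, ∃ q, P n q ∧ ∀ m < k, q m = p m := by
  choose! len ext hlen hP hagree using hext
  let Q : ℕ → ℕ × (ℕ → α) := fun k => (fun a => (len a.1 a.2, ext a.1 a.2))^[k] (0, p₀)
  have hQ_succ : ∀ k, Q (k + 1) = (len (Q k).1 (Q k).2, ext (Q k).1 (Q k).2) := fun k =>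
    Function.iterate_succ_apply' _ _ _
  have hQ : ∀ k, P (Q k).1 (Q k).2 := by
    intro k
    induction k with
    | zero => exact h₀
    | succ k ih => rw [hQ_succ]; exact hP _ _ ih
  have hmono : StrictMono fun k => (Q k).1 :=
    strictMono_nat_of_lt_succ fun k => by rw [hQ_succ]; exact hlen _ _ (hQ k)
  have hstable : ∀ k l m, k ≤ l → m < (Q k).1 → (Q l).2 m = (Q k).2 m := by
    intro k l m hkl hm
    induction l, hkl using Nat.le_induction with
    | base => rfl
    | succ l hl ih =>
      rw [hQ_succ]
      exact (hagree _ _ (hQ l) m (hm.trans_le (hmono.monotone hl))).trans ih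
  exact ⟨fun m => (Q (m + 1)).2 m, fun k => ⟨(Q k).1, hmono.le_apply, (Q k).2, hQ k, fun m hm =>
    hstable (m + 1) k m hm (hmono.le_apply (x := m + 1))⟩⟩

/-- `E n` is a bound for the total weight of the boxes that are still free once `n` squares have
been placed. -/
theorem exists_perfectlyPacked_of_weight_bound {u E : ℕ → ℝ} {δ T W : ℝ} (hδ : 0 ≤ δ)
    (hδ1 : δ ≤ 1) (hT : 1 ≤ T) (hW : 0 < W) (hu0 : ∀ n, 0 < u n) (hu : Antitone u)
    (hsum : HasSum (fun n => u n ^ 2) (W ^ 2)) (hE₀ : 2 * W ^ (1 + δ) ≤ E 0)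
    (harea : ∀ n, (T * u n) ^ (1 - δ) * E n < W ^ 2 - ∑ m ∈ Finset.range n, u m ^ 2)
    (hrow : ∀ n w, T * u n < w → w ≤ W → ∃ L : ℕ,
      ∑ i ∈ Finset.range L, u (n + i) ≤ w ∧ w < ∑ i ∈ Finset.range (L + 1), u (n + i) ∧
      E n + 2 * u n ^ (1 + δ) + L * (2 * u n * (u n - u (n + L)) ^ δ) ≤ E (n + L)) :
    ∃ pos : ℕ → ℝ × ℝ, PerfectlyPacked (fun n => square (pos n) (u n)) (square (0, 0) W) := by
  let P : ℕ → (ℕ → ℝ × ℝ) → Prop := fun n p =>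
    ∃ S, IsPartialPacking u W n p S ∧ (S.map (Box.weight δ)).sum ≤ E n
  have h₀ : P 0 fun _ => (0, 0) :=
    ⟨_, .zero hW.le _, by simpa [Box.weight_ofSide _ hW] using hE₀⟩
  have hext : ∀ n p, P n p → ∃ n' p', n < n' ∧ P n' p' ∧ ∀ m < n, p' m = p m := by
    rintro n p ⟨S, hS, hweight⟩
    have hTu : u n ≤ T * u n := le_mul_of_one_le_left (hu0 n).le hT
    obtain ⟨R, S, rfl, hRw, hRW, hRh⟩ := hS.exists_large_box hδ hδ1 <| by
      refine lt_of_le_of_lt ?_ (harea n)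
      have := (hu0 n).le
      gcongr
    obtain ⟨L, hL, hL', hEL⟩ := hrow n R.w hRw hRW
    have hLpos : 0 < L := by
      refine Nat.pos_of_ne_zero fun hL0 => ?_
      simp only [hL0, zero_add, Finset.sum_range_one, add_zero] at hL'
      linarith
    refine ⟨n + L, _, Nat.lt_add_of_pos_right hLpos, ⟨_, hS.append_row (fun i => (hu0 i).le) hu hL
      (hTu.trans hRw.le) (hTu.trans hRh.le), ?_⟩, fun m hm => if_pos hm⟩
    have hrest := Box.weight_rowRest_le (u := fun i => u (n + i)) hδ hδ1 (fun i => hu0 _)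
      (fun i j hij => hu (Nat.add_le_add_left hij n)) hL hL' (hTu.trans hRh.le)
    rw [Multiset.map_cons, Multiset.sum_cons] at hweight
    rw [Multiset.map_add, Multiset.sum_add]
    simp only [add_zero] at hrest
    linarith
  obtain ⟨pos, hpos⟩ := exists_forall_of_exists_prolongation h₀ hext
  refine ⟨pos, perfectlyPacked_of_forall_isPartialPacking hu0 hW hsum fun k => ?_⟩
  obtain ⟨n, hkn, p, ⟨S, hS, -⟩, hp⟩ := hpos k
  exact ⟨n, hkn, p, ⟨S, hS⟩, hp⟩

/-! ### Potter bounds -/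

/-- `f` grows at least like the power `a`, up to the factor `C`, from `N` on. In the theory of
regular variation this is the lower half of Potter's bounds. -/
def LowerPotter (f : ℕ → ℝ) (N : ℕ) (C a : ℝ) : Prop :=
  ∀ ⦃m n : ℕ⦄, N ≤ m → m ≤ n → ((n : ℝ) / m) ^ a * f m ≤ C * f n

/-- `f` grows at most like the power `b`, up to the factor `C`, from `N` on. In the theory of
regular variation this is the upper half of Potter's bounds. -/
def UpperPotter (f : ℕ → ℝ) (N : ℕ) (C b : ℝ) : Prop :=
  ∀ ⦃m n : ℕ⦄, N ≤ m → m ≤ n → f n ≤ C * ((n : ℝ) / m) ^ b * f m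

section Potter

variable {f : ℕ → ℝ} {N : ℕ} {C a b : ℝ}

lemma natCast_div_pos (hN : 0 < N) {m n : ℕ} (hm : N ≤ m) (hmn : m ≤ n) : 0 < (n : ℝ) / m :=
  div_pos (Nat.cast_pos.2 (by lia)) (Nat.cast_pos.2 (by lia))

namespace LowerPotter

lemma one_le (h : LowerPotter f N C a) (hN : 0 < N) (hf : 0 < f N) : 1 ≤ C := by
  have hself := h le_rfl le_rfl
  rw [div_self (Nat.cast_ne_zero.2 hN.ne'), Real.one_rpow] at hself
  exact le_of_mul_le_mul_right hself hf

lemma natCast_mul (h : LowerPotter f N C a) (hN : 0 < N) :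
    LowerPotter (fun n => n * f n) N C (a + 1) := by
  intro m n hm hmn
  have hm0 : (m : ℝ) ≠ 0 := Nat.cast_ne_zero.2 (by lia)
  calc ((n : ℝ) / m) ^ (a + 1) * (m * f m)
      = n * (((n : ℝ) / m) ^ a * f m) := by
        rw [Real.rpow_add_one (natCast_div_pos hN hm hmn).ne']
        field_simp
    _ ≤ n * (C * f n) := mul_le_mul_of_nonneg_left (h hm hmn) n.cast_nonneg
    _ = C * (n * f n) := by ring

lemma rpow (h : LowerPotter f N C a) (hN : 0 < N) (hf : ∀ n ≥ N, 0 < f n) {r : ℝ} (hr : 0 ≤ r) :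
    LowerPotter (fun n => f n ^ r) N (C ^ r) (a * r) := by
  intro m n hm hmn
  have hC : 0 ≤ C := zero_le_one.trans (h.one_le hN (hf N le_rfl))
  have hdiv := (natCast_div_pos hN hm hmn).le
  have hfm := (hf m hm).le
  rw [Real.rpow_mul hdiv, ← Real.mul_rpow (by positivity) hfm,
    ← Real.mul_rpow hC (hf n (hm.trans hmn)).le]
  exact Real.rpow_le_rpow (by positivity) (h hm hmn) hr

lemma rpow_neg (h : LowerPotter f N C a) (hN : 0 < N) (hf : ∀ n ≥ N, 0 < f n) {t : ℝ}
    (ht : 0 ≤ t) : UpperPotter (fun n => f n ^ (-t)) N (C ^ t) (a * -t) := by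
  intro m n hm hmn
  have hC : 0 < C := zero_lt_one.trans_le (h.one_le hN (hf N le_rfl))
  have hdiv := natCast_div_pos hN hm hmn
  have hfm := hf m hm
  have hfn := hf n (hm.trans hmn)
  have hle := Real.rpow_le_rpow_of_nonpos (by positivity) (h hm hmn) (neg_nonpos.2 ht)
  rw [Real.mul_rpow hC.le hfn.le, Real.mul_rpow (by positivity) hfm.le, ← Real.rpow_mul hdiv.le,
    Real.rpow_neg hC.le, inv_mul_le_iff₀ (by positivity)] at hle
  simpa only [mul_assoc] using hle

lemma le_mul_add (h : LowerPotter f N C a) (hN : 0 < N) (hf : ∀ n ≥ N, 0 < f n) (ha : a ≤ 0)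
    {n i : ℕ} (hn : N ≤ n) (hi : i ≤ n) : f n ≤ C * 2 ^ (-a) * f (n + i) := by
  have hn0 : (0 : ℝ) < n := Nat.cast_pos.2 (by lia)
  have hratio : ((n + i : ℕ) : ℝ) / n ≤ 2 := by
    rw [div_le_iff₀ hn0]
    push_cast
    linarith [(Nat.cast_le (α := ℝ)).2 hi]
  have hpow : (2 : ℝ) ^ a ≤ (((n + i : ℕ) : ℝ) / n) ^ a :=
    Real.rpow_le_rpow_of_nonpos (natCast_div_pos hN hn (Nat.le_add_right n i)) hratio ha
  have hle := (mul_le_mul_of_nonneg_right hpow (hf n hn).le).trans (h hn (Nat.le_add_right n i))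
  rw [← le_div_iff₀' (by positivity)] at hle
  rwa [Real.rpow_neg zero_le_two, mul_right_comm, ← div_eq_mul_inv]

lemma natCast_mul_le (h : LowerPotter f N C a) (hN : 0 < N) (hf : ∀ n ≥ N, 0 < f n)
    (ha : -1 ≤ a) {m n : ℕ} (hm : N ≤ m) (hmn : m ≤ n) : m * f m ≤ C * (n * f n) := by
  have hm0 : (0 : ℝ) < m := Nat.cast_pos.2 (by lia)
  have hle := h.natCast_mul hN hm hmn
  refine le_trans (le_mul_of_one_le_left (mul_pos hm0 (hf m hm)).le ?_) hle
  exact Real.one_le_rpow ((one_le_div hm0).2 (Nat.cast_le.2 hmn)) (by linarith)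

end LowerPotter

lemma UpperPotter.one_le (h : UpperPotter f N C b) (hN : 0 < N) (hf : 0 < f N) : 1 ≤ C := by
  have hself := h le_rfl le_rfl
  rw [div_self (Nat.cast_ne_zero.2 hN.ne'), Real.one_rpow, mul_one] at hself
  exact (le_mul_iff_one_le_left hf).1 hself

lemma UpperPotter.natCast_mul (h : UpperPotter f N C b) (hN : 0 < N) :
    UpperPotter (fun n => n * f n) N C (b + 1) := by
  intro m n hm hmn
  have hm0 : (m : ℝ) ≠ 0 := Nat.cast_ne_zero.2 (by lia)
  calc n * f n ≤ n * (C * ((n : ℝ) / m) ^ b * f m) := by gcongr; exact h hm hmn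
    _ = C * ((n : ℝ) / m) ^ (b + 1) * (m * f m) := by
        rw [Real.rpow_add_one (natCast_div_pos hN hm hmn).ne']
        field_simp

lemma UpperPotter.rpow_neg (h : UpperPotter f N C b) (hN : 0 < N) (hf : ∀ n ≥ N, 0 < f n) {t : ℝ}
    (ht : 0 ≤ t) : LowerPotter (fun n => f n ^ (-t)) N (C ^ t) (b * -t) := by
  intro m n hm hmn
  have hC : 0 < C := zero_lt_one.trans_le (h.one_le hN (hf N le_rfl))
  have hdiv := natCast_div_pos hN hm hmn
  have hfm := hf m hm
  have hfn := hf n (hm.trans hmn)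
  have hle := Real.rpow_le_rpow_of_nonpos hfn (h hm hmn) (neg_nonpos.2 ht)
  rwa [Real.mul_rpow (by positivity) hfm.le, Real.mul_rpow hC.le (by positivity),
    ← Real.rpow_mul hdiv.le, mul_assoc, Real.rpow_neg hC.le, inv_mul_le_iff₀ (by positivity)] at hle

lemma sum_rpow_le {p : ℝ} (hp : -1 < p) (hp0 : p ≤ 0) (n : ℕ) :
    ∑ m ∈ Finset.Icc 1 n, (m : ℝ) ^ p ≤ (n : ℝ) ^ (p + 1) / (p + 1) := by
  have hp1 : 0 < p + 1 := by linarith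
  induction n with
  | zero => simp [hp1.ne']
  | succ n ih =>
    have hn : (0 : ℝ) < (n + 1 : ℕ) := by positivity
    have hbernoulli := rpow_one_add_le_one_add_mul_self (s := -((n + 1 : ℕ) : ℝ)⁻¹)
      (neg_le_neg (Nat.cast_inv_le_one _)) hp1.le (by linarith)
    have hratio : 1 + -((n + 1 : ℕ) : ℝ)⁻¹ = n / (n + 1 : ℕ) := by
      field_simp
      push_cast
      ring
    rw [hratio, Real.div_rpow n.cast_nonneg hn.le, div_le_iff₀ (by positivity)] at hbernoulli
    rw [Finset.sum_Icc_succ_top n.succ_pos, le_div_iff₀ hp1]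
    rw [le_div_iff₀ hp1] at ih
    rw [Real.rpow_add_one hn.ne'] at hbernoulli ⊢
    field_simp at hbernoulli
    linarith

lemma LowerPotter.sum_Ico_le (h : LowerPotter f N C a) (hN : 0 < N) (hf : ∀ n ≥ N, 0 < f n)
    (ha : -1 < a) (ha0 : a ≤ 0) {k n : ℕ} (hk : N ≤ k) (hkn : k ≤ n) :
    ∑ m ∈ Finset.Ico k n, f m ≤ C / (a + 1) * (n * f n) := by
  have hn : (0 : ℝ) < n := Nat.cast_pos.2 (by lia)
  have hfn := hf n (hk.trans hkn)
  have hC : 0 < C := zero_lt_one.trans_le (h.one_le hN (hf N le_rfl))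
  have hterm : ∀ m ∈ Finset.Ico k n, f m ≤ C * f n * (n : ℝ) ^ (-a) * (m : ℝ) ^ a := by
    intro m hm
    obtain ⟨hkm, hmn⟩ := Finset.mem_Ico.1 hm
    have hm0 : (0 : ℝ) < m := Nat.cast_pos.2 (by lia)
    have hle := h (hk.trans hkm) hmn.le
    rw [Real.div_rpow hn.le hm0.le, div_mul_eq_mul_div, div_le_iff₀ (by positivity),
      ← le_div_iff₀' (by positivity)] at hle
    refine hle.trans_eq ?_
    rw [Real.rpow_neg hn.le]
    ring
  have hsum : ∑ m ∈ Finset.Ico k n, (m : ℝ) ^ a ≤ (n : ℝ) ^ (a + 1) / (a + 1) := by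
    refine le_trans ?_ (sum_rpow_le ha ha0 n)
    refine Finset.sum_le_sum_of_subset_of_nonneg (fun m hm => ?_) fun m _ _ => by positivity
    simp only [Finset.mem_Ico, Finset.mem_Icc] at hm ⊢
    lia
  calc ∑ m ∈ Finset.Ico k n, f m
      ≤ C * f n * (n : ℝ) ^ (-a) * ∑ m ∈ Finset.Ico k n, (m : ℝ) ^ a :=
        (Finset.sum_le_sum hterm).trans_eq (Finset.mul_sum _ _ _).symm
    _ ≤ C * f n * (n : ℝ) ^ (-a) * ((n : ℝ) ^ (a + 1) / (a + 1)) := by gcongr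
    _ = C / (a + 1) * (n * f n) := by
        rw [Real.rpow_neg hn.le, Real.rpow_add_one hn.ne']
        field_simp

end Potter

/-- The total area `∑_{m ≥ n} (s m)²` of the squares that are still to be packed at stage `n`. -/
noncomputable def sqTail (s : ℕ → ℝ) (n : ℕ) : ℝ := ∑' i, s (n + i) ^ 2

section SqTail

variable {s : ℕ → ℝ} {N n : ℕ} {C a b : ℝ}

lemma UpperPotter.sq_add_le (h : UpperPotter s N C b) (hN : 0 < N) (hs : ∀ n ≥ N, 0 < s n)
    (hn : N ≤ n) (i : ℕ) :
    s (n + i) ^ 2 ≤ (C * (n : ℝ) ^ (-b) * s n) ^ 2 * ((n + i : ℕ) : ℝ) ^ (2 * b) := by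
  have hn0 : (0 : ℝ) < n := Nat.cast_pos.2 (by lia)
  have hni := (hs (n + i) (by lia)).le
  calc s (n + i) ^ 2 ≤ (C * (((n + i : ℕ) : ℝ) / n) ^ b * s n) ^ 2 := by
        gcongr
        exact h hn (Nat.le_add_right n i)
    _ = (C * (n : ℝ) ^ (-b) * s n) ^ 2 * ((n + i : ℕ) : ℝ) ^ (2 * b) := by
        rw [Real.div_rpow (Nat.cast_nonneg _) hn0.le, mul_comm 2 b,
          Real.rpow_mul (Nat.cast_nonneg _), Real.rpow_two, Real.rpow_neg hn0.le]
        ring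

lemma summable_natCast_add_rpow (hb : b < -1 / 2) (n : ℕ) :
    Summable fun i : ℕ => ((n + i : ℕ) : ℝ) ^ (2 * b) :=
  (Real.summable_nat_rpow.2 (by linarith)).comp_injective (add_right_injective n)

lemma UpperPotter.summable_sq (h : UpperPotter s N C b) (hN : 0 < N) (hs : ∀ n ≥ N, 0 < s n)
    (hb : b < -1 / 2) (hn : N ≤ n) : Summable fun i => s (n + i) ^ 2 :=
  .of_nonneg_of_le (fun _ => sq_nonneg _) (h.sq_add_le hN hs hn)
    ((summable_natCast_add_rpow hb n).mul_left _)

lemma UpperPotter.sqTail_le (h : UpperPotter s N C b) (hN : 0 < N) (hs : ∀ n ≥ N, 0 < s n)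
    (hb : b < -1 / 2) (hn : N ≤ n) :
    sqTail s n ≤ (C * (n : ℝ) ^ (-b) * s n) ^ 2 * ∑' m : ℕ, (m : ℝ) ^ (2 * b) := by
  have hpowers := summable_natCast_add_rpow hb n
  calc sqTail s n ≤ ∑' i, (C * (n : ℝ) ^ (-b) * s n) ^ 2 * ((n + i : ℕ) : ℝ) ^ (2 * b) :=
        (h.summable_sq hN hs hb hn).tsum_le_tsum (h.sq_add_le hN hs hn) (hpowers.mul_left _)
    _ = (C * (n : ℝ) ^ (-b) * s n) ^ 2 * ∑' i, ((n + i : ℕ) : ℝ) ^ (2 * b) := tsum_mul_left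
    _ ≤ (C * (n : ℝ) ^ (-b) * s n) ^ 2 * ∑' m : ℕ, (m : ℝ) ^ (2 * b) := by
        refine mul_le_mul_of_nonneg_left ?_ (sq_nonneg _)
        exact hpowers.tsum_le_tsum_of_inj (n + ·) (add_right_injective n)
          (fun _ _ => by positivity) (fun _ => le_rfl) (Real.summable_nat_rpow.2 (by linarith))

lemma UpperPotter.eventually_sqrt_sqTail_rpow_le (h : UpperPotter s N C b) (hN : 0 < N)
    (hs : ∀ n ≥ N, 0 < s n) (hb : b < -1 / 2) {r ε : ℝ} (hr : 0 ≤ r) (hbr : -b * r < 1)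
    (hε : 0 < ε) : ∀ᶠ n in atTop, √(sqTail s n) ^ r ≤ ε * (n * s n ^ r) := by
  set A := C * √(∑' m : ℕ, (m : ℝ) ^ (2 * b))
  have hC : 0 < C := zero_lt_one.trans_le (h.one_le hN (hs N le_rfl))
  have hsmall : ∀ᶠ n : ℕ in atTop, A ^ r * (n : ℝ) ^ (-(1 - -b * r)) < ε := by
    have hlim := ((tendsto_rpow_neg_atTop (sub_pos.2 hbr)).comp
      tendsto_natCast_atTop_atTop).const_mul (A ^ r)
    rw [mul_zero] at hlim
    exact hlim.eventually_lt_const hε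
  filter_upwards [hsmall, eventually_ge_atTop N] with n hsmall hn
  have hn0 : (0 : ℝ) < n := Nat.cast_pos.2 (by lia)
  have hsn := (hs n hn).le
  have hsqrt : √(sqTail s n) ≤ A * ((n : ℝ) ^ (-b) * s n) := by
    refine (Real.sqrt_le_sqrt (h.sqTail_le hN hs hb hn)).trans_eq ?_
    rw [Real.sqrt_mul (sq_nonneg _), Real.sqrt_sq (by positivity)]
    ring
  calc √(sqTail s n) ^ r ≤ (A * ((n : ℝ) ^ (-b) * s n)) ^ r := by gcongr
    _ = A ^ r * (n : ℝ) ^ (-(1 - -b * r)) * (n * s n ^ r) := by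
        rw [Real.mul_rpow (by positivity) (by positivity), Real.mul_rpow (by positivity) hsn,
          ← Real.rpow_mul hn0.le, neg_sub, Real.rpow_sub_one hn0.ne']
        field_simp
    _ ≤ ε * (n * s n ^ r) := by gcongr

lemma LowerPotter.natCast_mul_sq_le_sqTail (h : LowerPotter s N C a) (hN : 0 < N)
    (hs : ∀ n ≥ N, 0 < s n) (ha : a ≤ 0) (hn : N ≤ n)
    (hsum : Summable fun i => s (n + i) ^ 2) :
    n * s n ^ 2 ≤ (C * 2 ^ (-a)) ^ 2 * sqTail s n := by
  have hterm : ∀ i ∈ Finset.range n, s n ^ 2 ≤ (C * 2 ^ (-a)) ^ 2 * s (n + i) ^ 2 := by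
    intro i hi
    rw [← mul_pow]
    exact pow_le_pow_left₀ (hs n hn).le
      (h.le_mul_add hN hs ha hn (Finset.mem_range.1 hi).le) 2
  calc n * s n ^ 2 = ∑ i ∈ Finset.range n, s n ^ 2 := by simp
    _ ≤ (C * 2 ^ (-a)) ^ 2 * ∑ i ∈ Finset.range n, s (n + i) ^ 2 := by
        rw [Finset.mul_sum]
        exact Finset.sum_le_sum hterm
    _ ≤ (C * 2 ^ (-a)) ^ 2 * sqTail s n := by
        gcongr
        exact hsum.sum_le_tsum _ fun _ _ => sq_nonneg _

lemma sum_range_add_sqTail (hsum : Summable fun i => s (n + i) ^ 2) (k : ℕ) :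
    ∑ i ∈ Finset.range k, s (n + i) ^ 2 + sqTail s (n + k) = sqTail s n := by
  simp only [sqTail, add_assoc, add_comm k]
  exact hsum.sum_add_tsum_nat_add k

end SqTail

/-! ### The weight of greedy rows -/

/-- Below the threshold `a - b = η * a` the first summand dominates, above it the second one. -/
lemma mul_sub_rpow_le {δ a b η : ℝ} (hδ : 0 ≤ δ) (hδ1 : δ ≤ 1) (hη : 0 < η) (hb : 0 < b)
    (hba : b ≤ a) :
    a * (a - b) ^ δ ≤ η ^ δ * a ^ (1 + δ) + η ^ (δ - 1) * (a ^ (1 + δ) - b ^ (1 + δ)) := by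
  have ha : 0 < a := hb.trans_le hba
  have hpow : ∀ {x : ℝ}, 0 < x → x ^ (1 + δ) = x * x ^ δ := fun hx => by
    rw [Real.rpow_add hx, Real.rpow_one]
  rcases le_or_gt (a - b) (η * a) with hnear | hfar
  · have hdrop : b ^ (1 + δ) ≤ a ^ (1 + δ) := by gcongr
    calc a * (a - b) ^ δ ≤ a * (η * a) ^ δ := by
          have := sub_nonneg.2 hba
          gcongr
      _ = η ^ δ * a ^ (1 + δ) := by rw [Real.mul_rpow hη.le ha.le, hpow ha]; ring
      _ ≤ η ^ δ * a ^ (1 + δ) + η ^ (δ - 1) * (a ^ (1 + δ) - b ^ (1 + δ)) :=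
          le_add_of_nonneg_right (mul_nonneg (by positivity) (sub_nonneg.2 hdrop))
  · have hηa : 0 < η * a := by positivity
    have hd : 0 < a - b := hηa.trans hfar
    calc a * (a - b) ^ δ = a * ((a - b) ^ (δ - 1) * (a - b)) := by
          rw [Real.rpow_sub_one hd.ne', div_mul_cancel₀ _ hd.ne']
      _ ≤ a * ((η * a) ^ (δ - 1) * (a - b)) := by
          gcongr ?_ * (?_ * _)
          exact Real.rpow_le_rpow_of_nonpos hηa hfar.le (by linarith)
      _ = η ^ (δ - 1) * (a * a ^ δ - b * a ^ δ) := by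
          rw [Real.mul_rpow hη.le ha.le, Real.rpow_sub_one ha.ne' δ]
          field_simp
      _ ≤ η ^ (δ - 1) * (a ^ (1 + δ) - b ^ (1 + δ)) := by rw [hpow ha, hpow hb]; gcongr
      _ ≤ η ^ δ * a ^ (1 + δ) + η ^ (δ - 1) * (a ^ (1 + δ) - b ^ (1 + δ)) :=
          le_add_of_nonneg_left (by positivity)

lemma exists_mul_sub_rpow_le {δ ε : ℝ} (hδ : 0 < δ) (hδ1 : δ ≤ 1) (hε : 0 < ε) :
    ∃ D > 0, ∀ ⦃a b : ℝ⦄, 0 < b → b ≤ a →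
      a * (a - b) ^ δ ≤ ε * a ^ (1 + δ) + D * (a ^ (1 + δ) - b ^ (1 + δ)) := by
  refine ⟨(ε ^ δ⁻¹) ^ (δ - 1), by positivity, fun a b hb hba => ?_⟩
  have hyoung := mul_sub_rpow_le hδ.le hδ1 (Real.rpow_pos_of_pos hε δ⁻¹) hb hba
  rwa [Real.rpow_inv_rpow hε.le hδ.ne'] at hyoung

lemma exists_sum_range_le_lt {u : ℕ → ℝ} {w : ℝ} (hw : 0 ≤ w) {M : ℕ}
    (hM : w < ∑ i ∈ Finset.range M, u i) :
    ∃ L < M, ∑ i ∈ Finset.range L, u i ≤ w ∧ w < ∑ i ∈ Finset.range (L + 1), u i := by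
  induction M with
  | zero => exact absurd hM (by simpa using hw)
  | succ M ih =>
    rcases le_or_gt (∑ i ∈ Finset.range M, u i) w with h | h
    · exact ⟨M, M.lt_succ_self, h, hM⟩
    · obtain ⟨L, hL, hLw⟩ := ih h
      exact ⟨L, hL.trans M.lt_succ_self, hLw⟩

lemma exists_greedy_row {u : ℕ → ℝ} {n : ℕ} {A K T w : ℝ} (hA : 1 < A) (hT : 0 ≤ T) (hu0 : 0 < u 0)
    (hu : ∀ i, u i ≤ u 0) (hK : ∀ i ≤ n, u 0 ≤ K * u i) (hTw : T * u 0 < w)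
    (hw : A * (K * w) ≤ n * u 0) :
    ∃ L : ℕ, ∑ i ∈ Finset.range L, u i ≤ w ∧ w < ∑ i ∈ Finset.range (L + 1), u i ∧
      T < L + 1 ∧ A * L ≤ n := by
  have hw0 : 0 < w := (mul_nonneg hT hu0.le).trans_lt hTw
  have hK0 : 0 < K :=
    (pos_iff_pos_of_mul_pos (hu0.trans_le (hK 0 n.zero_le))).2 hu0
  have hsum : ∀ L ≤ n, L * u 0 ≤ K * ∑ i ∈ Finset.range L, u i := by
    intro L hL
    rw [Finset.mul_sum, ← nsmul_eq_mul]
    simpa using Finset.card_nsmul_le_sum (Finset.range L) _ (u 0)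
      fun i hi => hK i ((Finset.mem_range.1 hi).le.trans hL)
  have hwn : w < ∑ i ∈ Finset.range n, u i := by
    have hKw : K * w < A * (K * w) := lt_mul_of_one_lt_left (by positivity) hA
    exact lt_of_mul_lt_mul_left (hKw.trans_le (hw.trans (hsum n le_rfl))) hK0.le
  obtain ⟨L, hLn, hL, hL'⟩ := exists_sum_range_le_lt hw0.le hwn
  refine ⟨L, hL, hL', ?_, ?_⟩
  · have hLu : ∑ i ∈ Finset.range (L + 1), u i ≤ ((L : ℝ) + 1) * u 0 := by
      simpa using Finset.sum_le_card_nsmul (Finset.range (L + 1)) u (u 0) fun i _ => hu i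
    exact lt_of_mul_lt_mul_right (hTw.trans (hL'.trans_le hLu)) hu0.le
  · refine le_of_mul_le_mul_right ?_ hu0
    calc A * L * u 0 = A * (L * u 0) := mul_assoc _ _ _
      _ ≤ A * (K * w) := by
        refine mul_le_mul_of_nonneg_left ((hsum L hLn.le).trans ?_) (by positivity)
        gcongr
      _ ≤ n * u 0 := hw

/-- A bound for the weight that rows of squares of sides `s k, s (k + 1), …` have generated up to
stage `n`, where `F n = (s n) ^ (1 + δ)`. The sum pays for the ends of the rows, the telescoping
difference for the gaps above the squares of a row. -/
noncomputable def rowBudget (F : ℕ → ℝ) (T : ℝ) (k n : ℕ) : ℝ :=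
  T⁻¹ * (7 * ∑ m ∈ Finset.Ico k n, F m + (k * F k - n * F n))

lemma rowBudget_add_le {s : ℕ → ℝ} {δ T D : ℝ} {k n L : ℕ} (hT : 0 < T) (hδ : 0 ≤ 1 + δ)
    (hs : ∀ i, 0 < s (n + i)) (hanti : AntitoneOn s (Ici n)) (hkn : k ≤ n)
    (hyoung : ∀ ⦃x y : ℝ⦄, 0 < y → y ≤ x →
      x * (x - y) ^ δ ≤ T⁻¹ * x ^ (1 + δ) + D * (x ^ (1 + δ) - y ^ (1 + δ)))
    (hTL : T ≤ 2 * L) (hLn : (6 + 2 * D * T) * L ≤ n) :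
    rowBudget (fun m => s m ^ (1 + δ)) T k n +
      (2 * s n ^ (1 + δ) + L * (2 * s n * (s n - s (n + L)) ^ δ)) ≤
    rowBudget (fun m => s m ^ (1 + δ)) T k (n + L) := by
  set F : ℕ → ℝ := fun m => s m ^ (1 + δ)
  have hs_le : ∀ {i j}, i ≤ j → s (n + j) ≤ s (n + i) := fun hij =>
    hanti (mem_Ici.2 (Nat.le_add_right n _)) (mem_Ici.2 (Nat.le_add_right n _)) (by lia)
  have hF_le : ∀ i ≤ L, F (n + L) ≤ F (n + i) := fun i hi =>
    Real.rpow_le_rpow (hs L).le (hs_le hi) hδ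
  have hFn : 0 < F n := Real.rpow_pos_of_pos (hs 0) _
  have hgap : T * (s n * (s n - s (n + L)) ^ δ) ≤ F n + D * T * (F n - F (n + L)) := calc
    _ ≤ T * (T⁻¹ * F n + D * (F n - F (n + L))) :=
      mul_le_mul_of_nonneg_left (hyoung (hs L) (hs_le L.zero_le)) hT.le
    _ = F n + D * T * (F n - F (n + L)) := by field_simp
  have hdrop : (6 + 2 * D * T) * L * (F n - F (n + L)) ≤ n * (F n - F (n + L)) :=
    mul_le_mul_of_nonneg_right hLn (sub_nonneg.2 (hF_le 0 L.zero_le))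
  have hrow : L * F (n + L) ≤ ∑ m ∈ Finset.Ico n (n + L), F m := by
    rw [Finset.sum_Ico_eq_sum_range, Nat.add_sub_cancel_left, ← nsmul_eq_mul]
    simpa using Finset.card_nsmul_le_sum (Finset.range L) _ (F (n + L))
      fun i hi => hF_le i (Finset.mem_range.1 hi).le
  have hcost : T * (2 * F n + L * (2 * s n * (s n - s (n + L)) ^ δ)) ≤
      7 * ∑ m ∈ Finset.Ico n (n + L), F m + (n * F n - (n + L : ℕ) * F (n + L)) := calc
    _ = T * (2 * F n) + 2 * L * (T * (s n * (s n - s (n + L)) ^ δ)) := by ring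
    _ ≤ 2 * L * (2 * F n) + 2 * L * (F n + D * T * (F n - F (n + L))) := by gcongr
    _ = (6 + 2 * D * T) * L * (F n - F (n + L)) + 6 * (L * F (n + L)) := by ring
    _ ≤ 7 * ∑ m ∈ Finset.Ico n (n + L), F m + (n * F n - (n + L : ℕ) * F (n + L)) := by
      push_cast
      linarith
  rw [← le_inv_mul_iff₀ hT] at hcost
  rw [rowBudget, rowBudget, ← Finset.sum_Ico_consecutive F hkn (Nat.le_add_right n L)]
  refine (add_le_add_right hcost _).trans_eq ?_
  ring

lemma LowerPotter.rowBudget_le {F : ℕ → ℝ} {N k n : ℕ} {C p T : ℝ} (h : LowerPotter F N C p)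
    (hN : 0 < N) (hF : ∀ n ≥ N, 0 < F n) (hp : -1 < p) (hp0 : p ≤ 0) (hT : 0 < T) (hk : N ≤ k)
    (hkn : k ≤ n) :
    rowBudget F T k n + T⁻¹ * (k * F k) ≤ T⁻¹ * (9 * C / (p + 1) * (n * F n)) := by
  have hFn : 0 < n * F n := mul_pos (Nat.cast_pos.2 (by lia)) (hF n (by lia))
  have hC : 0 < C := zero_lt_one.trans_le (h.one_le hN (hF N le_rfl))
  have hkF : k * F k ≤ C / (p + 1) * (n * F n) :=
    (h.natCast_mul_le hN hF hp.le hk hkn).trans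
      (mul_le_mul_of_nonneg_right (le_div_self hC.le (by linarith) (by linarith)) hFn.le)
  have hsum := h.sum_Ico_le hN hF hp hp0 hk hkn
  rw [rowBudget, ← mul_add]
  gcongr
  linear_combination 7 * hsum + 2 * hkF + hFn

lemma mul_rpow_one_sub_mul_rpow_one_add {x T : ℝ} (hx : 0 < x) (hT : 0 < T) (δ : ℝ) :
    (T * x) ^ (1 - δ) * (T⁻¹ * x ^ (1 + δ)) = x ^ 2 / T ^ δ := by
  rw [Real.mul_rpow hT.le hx.le, Real.rpow_sub hT, Real.rpow_sub hx, Real.rpow_add hx,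
    Real.rpow_one, Real.rpow_one]
  field_simp

section Packing

variable {s : ℕ → ℝ} {N k : ℕ} {C a b δ : ℝ}

lemma LowerPotter.rpow_mul_rowBudget_lt_sqTail (hlow : LowerPotter s N C a) (hN : 0 < N)
    (hs : ∀ n ≥ N, 0 < s n) (hδ : 0 < δ) (ha : -1 < a * (1 + δ)) (ha0 : a ≤ 0) {n : ℕ}
    (hk : N ≤ k) (hkn : k ≤ n) (hsum : Summable fun i => s (n + i) ^ 2) {T W : ℝ} (hT : 0 < T)
    (hTδ : 9 * C ^ (1 + δ) / (a * (1 + δ) + 1) * (C * 2 ^ (-a)) ^ 2 < T ^ δ)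
    (hW : 2 * W ^ (1 + δ) ≤ T⁻¹ * (k * s k ^ (1 + δ))) :
    (T * s n) ^ (1 - δ) * (rowBudget (fun m => s m ^ (1 + δ)) T k n + 2 * W ^ (1 + δ)) <
      sqTail s n := by
  set M := 9 * C ^ (1 + δ) / (a * (1 + δ) + 1)
  have hsn : 0 < s n := hs n (hk.trans hkn)
  have hC : 0 < C := zero_lt_one.trans_le (hlow.one_le hN (hs N le_rfl))
  have hM : 0 < M := div_pos (by positivity) (by linarith)
  have hn : (0 : ℝ) < n := Nat.cast_pos.2 (by lia)
  have htail := hlow.natCast_mul_sq_le_sqTail hN hs ha0 (hk.trans hkn) hsum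
  have htail_pos : 0 < sqTail s n := by
    refine pos_of_mul_pos_right (lt_of_lt_of_le ?_ htail) (sq_nonneg _)
    positivity
  have hbudget := (hlow.rpow hN hs (r := 1 + δ) (by linarith)).rowBudget_le hN
    (fun m hm => Real.rpow_pos_of_pos (hs m hm) _) ha
    (mul_nonpos_of_nonpos_of_nonneg ha0 (by linarith)) hT hk hkn
  calc (T * s n) ^ (1 - δ) * (rowBudget (fun m => s m ^ (1 + δ)) T k n + 2 * W ^ (1 + δ))
      ≤ (T * s n) ^ (1 - δ) * (T⁻¹ * (M * (n * s n ^ (1 + δ)))) := by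
        gcongr
        exact (add_le_add_right hW _).trans hbudget
    _ = M * (n * ((T * s n) ^ (1 - δ) * (T⁻¹ * s n ^ (1 + δ)))) := by ring
    _ = M * (n * s n ^ 2) / T ^ δ := by
        rw [mul_rpow_one_sub_mul_rpow_one_add hsn hT]
        ring
    _ ≤ M * ((C * 2 ^ (-a)) ^ 2 * sqTail s n) / T ^ δ := by gcongr
    _ < sqTail s n := by
        rw [← mul_assoc, div_lt_iff₀ (by positivity), mul_comm (sqTail s n)]
        gcongr

lemma LowerPotter.exists_row_rowBudget_le (hlow : LowerPotter s N C a) (hN : 0 < N)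
    (hs : ∀ n ≥ N, 0 < s n) (hanti : AntitoneOn s (Ici N)) (hδ : 0 ≤ δ) (ha0 : a ≤ 0) {n : ℕ}
    (hk : N ≤ k) (hkn : k ≤ n) {D T w : ℝ} (hD : 0 < D) (hT : 2 ≤ T)
    (hyoung : ∀ ⦃x y : ℝ⦄, 0 < y → y ≤ x →
      x * (x - y) ^ δ ≤ T⁻¹ * x ^ (1 + δ) + D * (x ^ (1 + δ) - y ^ (1 + δ)))
    (hTw : T * s n < w) (hwn : (6 + 2 * D * T) * (C * 2 ^ (-a) * w) ≤ n * s n) :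
    ∃ L : ℕ, ∑ i ∈ Finset.range L, s (n + i) ≤ w ∧ w < ∑ i ∈ Finset.range (L + 1), s (n + i) ∧
      rowBudget (fun m => s m ^ (1 + δ)) T k n +
        (2 * s n ^ (1 + δ) + L * (2 * s n * (s n - s (n + L)) ^ δ)) ≤
      rowBudget (fun m => s m ^ (1 + δ)) T k (n + L) := by
  have hT0 : 0 < T := by linarith
  have hanti_n : AntitoneOn s (Ici n) := hanti.mono (Ici_subset_Ici.2 (hk.trans hkn))
  have hA : 1 < 6 + 2 * D * T := by nlinarith
  obtain ⟨L, hL, hL', hTL, hLn⟩ := exists_greedy_row (u := fun i => s (n + i)) hA hT0.le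
    (hs n (by lia)) (fun i => hanti_n self_mem_Ici (Nat.le_add_right n i) (Nat.le_add_right n i))
    (fun i hi => hlow.le_mul_add hN hs ha0 (by lia) hi) hTw hwn
  exact ⟨L, hL, hL', rowBudget_add_le hT0 (by linarith) (fun i => hs (n + i) (by lia)) hanti_n hkn
    hyoung (by linarith) hLn⟩

/-- The last two assumptions say that the packed square is small compared to `k` squares of side
`s k` in a row. -/
lemma LowerPotter.exists_perfectlyPacked (hlow : LowerPotter s N C a) (hN : 0 < N)
    (hs : ∀ n ≥ N, 0 < s n) (hanti : AntitoneOn s (Ici N)) (hδ : 0 < δ) (hδ1 : δ ≤ 1)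
    (ha : -1 < a * (1 + δ)) (ha0 : a ≤ 0) (hk : N ≤ k) (hsum : Summable fun i => s (k + i) ^ 2)
    {D T : ℝ} (hD : 0 < D) (hT : 2 ≤ T)
    (hyoung : ∀ ⦃x y : ℝ⦄, 0 < y → y ≤ x →
      x * (x - y) ^ δ ≤ T⁻¹ * x ^ (1 + δ) + D * (x ^ (1 + δ) - y ^ (1 + δ)))
    (hTδ : 9 * C ^ (1 + δ) / (a * (1 + δ) + 1) * (C * 2 ^ (-a)) ^ 2 < T ^ δ)
    (hstart : 2 * √(sqTail s k) ^ (1 + δ) ≤ T⁻¹ * (k * s k ^ (1 + δ)))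
    (hwidth : C * ((6 + 2 * D * T) * (C * 2 ^ (-a) * √(sqTail s k))) ≤ k * s k) :
    ∃ pos : ℕ → ℝ × ℝ,
      PerfectlyPacked (fun i => square (pos i) (s (k + i))) (square (0, 0) √(sqTail s k)) := by
  set W := √(sqTail s k)
  have hT0 : 0 < T := by linarith
  have hC : 0 < C := zero_lt_one.trans_le (hlow.one_le hN (hs N le_rfl))
  have hs' : ∀ i, 0 < s (k + i) := fun i => hs _ (by lia)
  have hs_le : ∀ {i j}, k ≤ i → i ≤ j → s j ≤ s i := fun hi hij =>
    hanti (mem_Ici.2 (by lia)) (mem_Ici.2 (by lia)) hij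
  have htail : 0 < sqTail s k := hsum.tsum_pos (fun _ => sq_nonneg _) 0 (pow_pos (hs' 0) 2)
  have hW2 : W ^ 2 = sqTail s k := Real.sq_sqrt htail.le
  refine exists_perfectlyPacked_of_weight_bound (T := T)
    (E := fun i => rowBudget (fun m => s m ^ (1 + δ)) T k (k + i) + 2 * W ^ (1 + δ))
    hδ.le hδ1 (by linarith) (Real.sqrt_pos.2 htail) hs' (fun i j hij => hs_le (by lia) (by lia))
    (hW2 ▸ hsum.hasSum) (by simp [rowBudget]) (fun i => ?_) fun i w hTw hwW => ?_
  · rw [hW2, ← sum_range_add_sqTail hsum i, add_sub_cancel_left]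
    refine hlow.rpow_mul_rowBudget_lt_sqTail hN hs hδ ha ha0 hk (Nat.le_add_right k i) ?_ hT0 hTδ
      hstart
    simpa only [add_assoc, Function.comp_def] using hsum.comp_injective (add_right_injective i)
  · have hgrow : k * s k ≤ C * ((k + i : ℕ) * s (k + i)) :=
      hlow.natCast_mul_le hN hs (by nlinarith) hk (Nat.le_add_right k i)
    obtain ⟨L, hL, hL', hbudget⟩ := hlow.exists_row_rowBudget_le hN hs hanti hδ.le ha0 hk
      (Nat.le_add_right k i) (w := w) hD hT hyoung hTw <| by
        refine le_of_mul_le_mul_left (le_trans ?_ (hwidth.trans hgrow)) hC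
        gcongr
    simp only [add_assoc] at hL hL' hbudget ⊢
    exact ⟨L, hL, hL', by linarith⟩

theorem eventually_exists_perfectlyPacked {C' : ℝ} (hN : 0 < N) (hs : ∀ n ≥ N, 0 < s n)
    (hanti : AntitoneOn s (Ici N)) (hlow : LowerPotter s N C a) (hup : UpperPotter s N C' b)
    (ha : -1 < a) (hab : a ≤ b) (hb : b < -1 / 2) :
    ∀ᶠ k in atTop, ∃ pos : ℕ → ℝ × ℝ,
      PerfectlyPacked (fun i => square (pos i) (s (k + i))) (square (0, 0) √(sqTail s k)) := by
  have hC : 0 < C := zero_lt_one.trans_le (hlow.one_le hN (hs N le_rfl))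
  obtain ⟨δ, hδ, hδ1, haδ⟩ : ∃ δ : ℝ, 0 < δ ∧ δ ≤ 1 ∧ -1 < a * (1 + δ) :=
    ⟨(1 + a) / 2, by linarith, by linarith, by nlinarith⟩
  obtain ⟨T, hT, hTδ⟩ : ∃ T : ℝ, 2 ≤ T ∧
      9 * C ^ (1 + δ) / (a * (1 + δ) + 1) * (C * 2 ^ (-a)) ^ 2 < T ^ δ :=
    ((eventually_ge_atTop 2).and ((tendsto_rpow_atTop hδ).eventually_gt_atTop _)).exists
  have hT0 : 0 < T := by linarith
  obtain ⟨D, hD, hyoung⟩ := exists_mul_sub_rpow_le hδ hδ1 (inv_pos.2 hT0)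
  have hstart := hup.eventually_sqrt_sqTail_rpow_le hN hs hb (r := 1 + δ) (by linarith)
    (by nlinarith) (inv_pos.2 (mul_pos hT0 two_pos))
  have hwidth := hup.eventually_sqrt_sqTail_rpow_le hN hs hb zero_le_one (by linarith)
    (ε := (C * ((6 + 2 * D * T) * (C * 2 ^ (-a))))⁻¹) (by positivity)
  filter_upwards [hstart, hwidth, eventually_ge_atTop N] with k hstart hwidth hk
  refine hlow.exists_perfectlyPacked hN hs hanti hδ hδ1 haδ (by linarith) hk
    (hup.summable_sq hN hs hb hk) hD hT hyoung hTδ ?_ ?_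
  · rw [mul_inv, mul_assoc, mul_comm, mul_assoc, ← div_eq_inv_mul, le_div_iff₀' two_pos] at hstart
    linarith
  · rw [Real.rpow_one, Real.rpow_one, le_inv_mul_iff₀ (by positivity)] at hwidth
    linarith

end Packing

/-! ### Almost increasing functions of slow growth -/

section AlmostMonotone

variable {κ : ℕ → ℝ} {α C : ℝ}

lemma eventually_lowerPotter (hα : α ≤ 1)
    (halmost : ∀ᶠ n : ℕ in atTop, ∀ m : ℕ, (n : ℝ) ^ α ≤ m → κ n ≤ C * κ m) :
    ∀ᶠ N in atTop, LowerPotter κ N C 0 := by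
  filter_upwards [eventually_forall_ge_atTop.2 halmost, eventually_gt_atTop 0]
    with N halmost hN m n hm hmn
  rw [Real.rpow_zero, one_mul]
  refine halmost m hm n (le_trans ?_ (Nat.cast_le.2 hmn))
  exact Real.rpow_le_self_of_one_le (Nat.one_le_cast.2 (by lia)) hα

/-- Either `n` is at most a power of `m` and almost monotonicity applies, or `n / m` is at least a
power of `n` and the growth bound alone suffices. -/
lemma exists_eventually_upperPotter {θ : ℝ} (hθ : 0 < θ) (hα : α < 1)
    (hpos : ∀ᶠ n in atTop, 0 < κ n)
    (hgrowth : ∀ ε : ℝ, 0 < ε → ∀ᶠ n : ℕ in atTop, κ n ≤ (n : ℝ) ^ ε)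
    (halmost : ∀ᶠ n : ℕ in atTop, ∀ m : ℕ, (n : ℝ) ^ α ≤ m → κ n ≤ C * κ m) :
    ∃ C', ∀ᶠ N in atTop, UpperPotter κ N C' θ := by
  obtain ⟨N₀, hN₀, hκN₀, hlower⟩ := ((eventually_gt_atTop 0).and
    (hpos.and (eventually_lowerPotter hα.le halmost))).exists
  have hC : 0 ≤ C := zero_le_one.trans (hlower.one_le hN₀ hκN₀)
  replace hgrowth := hgrowth ((1 - α) * θ) (mul_pos (sub_pos.2 hα) hθ)
  refine ⟨max C (C / κ N₀), ?_⟩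
  filter_upwards [eventually_forall_ge_atTop.2 halmost, eventually_forall_ge_atTop.2 hpos,
    eventually_forall_ge_atTop.2 hgrowth, eventually_ge_atTop N₀]
    with N halmost hpos hgrowth hN m n hm hmn
  have hm0 : (0 : ℝ) < m := Nat.cast_pos.2 (by lia)
  have hn0 : (0 : ℝ) < n := Nat.cast_pos.2 (by lia)
  have hκm := hpos m hm
  have hκ1 : 1 ≤ C / κ N₀ * κ m := by
    rw [div_mul_eq_mul_div, one_le_div hκN₀]
    simpa using hlower le_rfl (hN.trans hm)
  have hratio : 1 ≤ ((n : ℝ) / m) ^ θ :=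
    Real.one_le_rpow ((one_le_div hm0).2 (Nat.cast_le.2 hmn)) hθ.le
  rcases le_or_gt ((n : ℝ) ^ α) m with hnear | hfar
  · calc κ n ≤ C * κ m := halmost n (hm.trans hmn) m hnear
      _ ≤ max C (C / κ N₀) * ((n : ℝ) / m) ^ θ * κ m := by
        gcongr
        exact (le_max_left C (C / κ N₀)).trans
          (le_mul_of_one_le_right (hC.trans (le_max_left _ _)) hratio)
  · have hpow : (n : ℝ) ^ (1 - α) ≤ n / m := by
      rw [Real.rpow_sub hn0, Real.rpow_one]
      gcongr
    calc κ n ≤ (n : ℝ) ^ ((1 - α) * θ) := hgrowth n (hm.trans hmn)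
      _ ≤ ((n : ℝ) / m) ^ θ := by
        rw [Real.rpow_mul hn0.le]
        gcongr
      _ ≤ ((n : ℝ) / m) ^ θ * (C / κ N₀ * κ m) :=
        le_mul_of_one_le_right (by positivity) hκ1
      _ ≤ max C (C / κ N₀) * ((n : ℝ) / m) ^ θ * κ m := by
        rw [← mul_assoc, mul_comm _ (C / κ N₀)]
        gcongr
        exact le_max_right C (C / κ N₀)

end AlmostMonotone

/-- The index `n ≥ n₀` as an offset from `n₀`. -/
def natGeEquiv (n₀ : ℕ) : {n : ℕ // n₀ ≤ n} ≃ ℕ where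
  toFun n := n - n₀
  invFun i := ⟨n₀ + i, n₀.le_add_right i⟩
  left_inv n := Subtype.ext (Nat.add_sub_cancel' n.2)
  right_inv i := Nat.add_sub_cancel_left n₀ i

lemma tsum_natGe (f : ℕ → ℝ) (n₀ : ℕ) : ∑' n : {n : ℕ // n₀ ≤ n}, f n = ∑' i, f (n₀ + i) :=
  ((natGeEquiv n₀).symm.tsum_eq fun n => f n).symm

theorem ineffective_perfect_packing_general {κ : ℕ → ℝ} {α C t : ℝ} (hα : α < 1)
    (hpos : ∀ᶠ n in atTop, 0 < κ n)
    (hmono : ∀ᶠ N in atTop, MonotoneOn (fun n : ℕ => n * κ n) (Ici N))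
    (hgrowth : ∀ ε : ℝ, 0 < ε → ∀ᶠ n : ℕ in atTop, κ n ≤ (n : ℝ) ^ ε)
    (halmost : ∀ᶠ n : ℕ in atTop, ∀ m : ℕ, (n : ℝ) ^ α ≤ m → κ n ≤ C * κ m)
    (ht : 1 / 2 < t) (ht1 : t < 1) :
    ∀ᶠ n₀ in atTop, ∃ (c : ℝ × ℝ) (pos : {n : ℕ // n₀ ≤ n} → ℝ × ℝ),
      PerfectlyPacked (fun n : {n : ℕ // n₀ ≤ n} => square (pos n) ((n * κ n) ^ (-t)))
        (square c √(∑' n : {n : ℕ // n₀ ≤ n}, (n * κ n) ^ (-(2 * t)))) := by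
  set θ := (1 - t) / (2 * t)
  have hθ : 0 < θ := div_pos (by linarith) (by linarith)
  have hθt : (θ + 1) * t = (1 + t) / 2 := by
    simp only [θ]
    field_simp
    ring
  obtain ⟨C', hupper⟩ := exists_eventually_upperPotter hθ hα hpos hgrowth halmost
  obtain ⟨N, hN, hpos, hmono, hlower, hupper⟩ := ((eventually_gt_atTop 0).and
    ((eventually_forall_ge_atTop.2 hpos).and
      (hmono.and ((eventually_lowerPotter hα.le halmost).and hupper)))).exists
  set s : ℕ → ℝ := fun n => (n * κ n) ^ (-t)
  have hf : ∀ n ≥ N, 0 < n * κ n := fun n hn =>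
    mul_pos (Nat.cast_pos.2 (hN.trans_le hn)) (hpos n hn)
  have hs : ∀ n ≥ N, 0 < s n := fun n hn => Real.rpow_pos_of_pos (hf n hn) _
  have hanti : AntitoneOn s (Ici N) := fun m hm n hn hmn =>
    Real.rpow_le_rpow_of_nonpos (hf m hm) (hmono hm hn hmn) (by linarith)
  filter_upwards [eventually_exists_perfectlyPacked hN hs hanti
    ((hupper.natCast_mul hN).rpow_neg hN hf (t := t) (by linarith))
    ((hlower.natCast_mul hN).rpow_neg hN hf (t := t) (by linarith))
    (by linarith) (by linarith) (by linarith), eventually_ge_atTop N] with n₀ ⟨pos, hpacked⟩ hn₀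
  refine ⟨(0, 0), pos ∘ natGeEquiv n₀, ?_⟩
  have hside : ∑' n : {n : ℕ // n₀ ≤ n}, (n * κ n) ^ (-(2 * t)) = sqTail s n₀ := by
    rw [tsum_natGe fun n => (n * κ n) ^ (-(2 * t))]
    refine tsum_congr fun i => ?_
    rw [← Real.rpow_natCast, ← Real.rpow_mul (hf _ (by lia)).le]
    congr 1
    push_cast
    ring
  rw [hside]
  convert hpacked.comp_equiv (natGeEquiv n₀) using 2 with n
  simp only [Function.comp, natGeEquiv, Equiv.coe_fn_mk, Nat.add_sub_cancel' n.2, s]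

lemma eventually_forall_le_mul_of_le_mul_sInf {κ : ℝ → ℝ} {α C : ℝ} (hα : 0 < α) (hC : 0 ≤ C)
    (hκ : ∀ x, 1 < x → 0 ≤ κ x)
    (h : ∀ᶠ n : ℕ in atTop, κ n ≤ C * sInf (κ '' Ici ((n : ℝ) ^ α))) :
    ∀ᶠ n : ℕ in atTop, ∀ m : ℕ, (n : ℝ) ^ α ≤ m → κ n ≤ C * κ m := by
  filter_upwards [h, eventually_gt_atTop 1] with n hn hn1 m hnm
  have hbdd : BddBelow (κ '' Ici ((n : ℝ) ^ α)) := by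
    refine ⟨0, forall_mem_image.2 fun x hx => hκ x (lt_of_lt_of_le ?_ hx)⟩
    exact Real.one_lt_rpow (Nat.one_lt_cast.2 hn1) hα
  exact hn.trans (mul_le_mul_of_nonneg_left (csInf_le hbdd (mem_image_of_mem κ hnm)) hC)

theorem ineffective_perfect_packing
    (κ : ℝ → ℝ)
    (hκ_gt_one : ∀ x : ℝ, 1 < x → 1 < κ x)
    (hκ_smooth : ContDiffOn ℝ (⊤ : ℕ∞) κ (Set.Ioi 1))
    (hf_incr : StrictMonoOn (fun x : ℝ => x * κ x) (Set.Ioi 1))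
    -- fixed positive constants C_𝔪 > c_𝔪 > 0 and 0 < α < 1, C_α > 1
    (cm Cm : ℝ) (hcm : 0 < cm) (hcmCm : cm < Cm)
    (α Cα : ℝ) (hα₁ : 0 < α) (hα₂ : α < 1) (hCα : 1 < Cα)
    -- for every ε > 0 there is N_ε such that the stated conditions hold for all n ≥ N_ε
    (hcond : ∀ ε : ℝ, 0 < ε → ∃ Nε : ℕ, 0 < Nε ∧ ∀ n : ℕ, Nε ≤ n →
      (∀ x ∈ Set.Icc (n : ℝ) (2 * (n : ℝ)), derivWithin κ (Set.Ioi 1) x ≤ ε * κ (n : ℝ)) ∧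
      (1 - ε) * sInf (κ '' Set.Ioc (1 : ℝ) (2 * (n : ℝ))) ≤ κ (n : ℝ) ∧
      κ (n : ℝ) ≤ (n : ℝ) ^ ε ∧
      cm * κ (n : ℝ) ≤ sInf (κ '' Set.Ici (n : ℝ)) ∧
      sInf (κ '' Set.Ici (n : ℝ)) ≤ Cm * κ (n : ℝ) ∧
      κ (n : ℝ) ≤ Cα * sInf (κ '' Set.Ici ((n : ℝ) ^ α))) :
    ∀ t : ℝ, 1 / 2 < t → t < 1 →
      ∃ N₀ : ℕ, 0 < N₀ ∧ ∀ n₀ : ℕ, N₀ ≤ n₀ →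
        ∃ (c : ℝ × ℝ) (pos : {n : ℕ // n₀ ≤ n} → ℝ × ℝ),
          PerfectlyPacked
            (fun n : {n : ℕ // n₀ ≤ n} =>
              square (pos n) ((((n : ℕ) : ℝ) * κ (((n : ℕ) : ℝ))) ^ (-t)))
            (square c
              (Real.sqrt
                (∑' n : {n : ℕ // n₀ ≤ n},
                  ((((n : ℕ) : ℝ) * κ (((n : ℕ) : ℝ))) ^ (-(2 * t)))))) := by
  intro t ht ht1
  refine (atTop_basis' 1).eventually_iff.1
    (ineffective_perfect_packing_general (κ := fun n : ℕ => κ n) hα₂ ?pos ?mono ?growth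
      (eventually_forall_le_mul_of_le_mul_sInf hα₁ (zero_le_one.trans hCα.le)
        (fun x hx => zero_le_one.trans (hκ_gt_one x hx).le) ?almost) ht ht1)
  case pos =>
    filter_upwards [eventually_gt_atTop 1] with n hn
    exact zero_lt_one.trans (hκ_gt_one n (Nat.one_lt_cast.2 hn))
  case mono =>
    filter_upwards [eventually_gt_atTop 1] with N hN m hm n hn hmn
    exact hf_incr.monotoneOn (mem_Ioi.2 (Nat.one_lt_cast.2 (hN.trans_le hm)))
      (mem_Ioi.2 (Nat.one_lt_cast.2 (hN.trans_le hn))) (Nat.cast_le.2 hmn)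
  case growth =>
    intro ε hε
    obtain ⟨N, -, hN⟩ := hcond ε hε
    exact eventually_atTop.2 ⟨N, fun n hn => (hN n hn).2.2.1⟩
  case almost =>
    obtain ⟨N, -, hN⟩ := hcond 1 one_pos
    exact eventually_atTop.2 ⟨N, fun n hn => (hN n hn).2.2.2.2.2⟩
end
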